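/- arXiv:2110.02013 — 2 statements merged into one kernel-verified Lean document; each statement's English description precedes it below -/
import Mathlib

section
/- Let B be a brace, and let C and C' be conformal cycles in B with C' ≠ C such that there is an edge e ∈ E(B) ∖ E(C) with both endpoints on C and C' is a subgraph of C + e (the subgraph consisting of C together with e). If there exist a perfect matching M of B and two vertex-disjoint M-alternating paths L and R that form a matching cross over C', then there exists a matching cross over C in B neither of whose two paths contains the edge e. -/
namespace Paper

open SimpleGraph

variable {V : Type*} {W : Type*}

/-- `M` is a perfect matching of the vertex set `S` in the graph `G`:
a set of pairwise disjoint edges of `G`, all within `S`, covering every vertex of `S`. -/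
def IsPMOn (G : SimpleGraph V) (S : Set V) (M : Set (Sym2 V)) : Prop :=
  (∀ e ∈ M, e ∈ G.edgeSet) ∧ (∀ e ∈ M, ∀ v ∈ e, v ∈ S) ∧
    ∀ v ∈ S, ∃! e, e ∈ M ∧ v ∈ e

/-- `M` is a perfect matching of `G`. -/
def IsPM (G : SimpleGraph V) (M : Set (Sym2 V)) : Prop :=
  IsPMOn G Set.univ M

/-- The edges in `F` are pairwise vertex-disjoint. -/
def PairwiseDisjointEdges (F : Set (Sym2 V)) : Prop :=
  ∀ e ∈ F, ∀ f ∈ F, e ≠ f → ∀ x : V, x ∈ e → x ∉ f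

/-- All edges of `G` have both endpoints in `S`. -/
def EdgesWithin (G : SimpleGraph V) (S : Set V) : Prop :=
  ∀ ⦃x y : V⦄, G.Adj x y → x ∈ S ∧ y ∈ S

def ConnectedOn (G : SimpleGraph V) (S : Set V) : Prop :=
  S.Nonempty ∧ ∀ x ∈ S, ∀ y ∈ S, G.Reachable x y

/-- The graph `G` with vertex set `S` is a brace: it is connected and every matching of
size at most two extends to a perfect matching. -/
def IsBraceOn (G : SimpleGraph V) (S : Set V) : Prop :=
  EdgesWithin G S ∧ ConnectedOn G S ∧
    ∀ F : Set (Sym2 V), F ⊆ G.edgeSet → PairwiseDisjointEdges F → F.ncard ≤ 2 →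
      ∃ M, IsPMOn G S M ∧ F ⊆ M

def IsBrace (G : SimpleGraph V) : Prop :=
  IsBraceOn G Set.univ

def IsBipartitionOf (G : SimpleGraph V) (V1 V2 : Set V) : Prop :=
  Disjoint V1 V2 ∧ V1 ∪ V2 = Set.univ ∧ ∀ ⦃x y : V⦄, G.Adj x y → (x ∈ V1 ↔ y ∈ V2)

def IsBipartite (G : SimpleGraph V) : Prop :=
  ∃ V1 V2 : Set V, IsBipartitionOf G V1 V2

def MatchingCoveredOn (G : SimpleGraph V) (S : Set V) : Prop :=
  EdgesWithin G S ∧ ConnectedOn G S ∧ ∀ e ∈ G.edgeSet, ∃ M, IsPMOn G S M ∧ e ∈ M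

def MatchingCovered (G : SimpleGraph V) : Prop :=
  MatchingCoveredOn G Set.univ

/-- Every vertex of `A` is covered exactly once by an edge of `M ∩ Es`;
i.e. `M ∩ Es` is a perfect matching of the subgraph with vertex set `A` and edge set `Es`. -/
def MatchesExactly (M Es : Set (Sym2 V)) (A : Set V) : Prop :=
  ∀ v ∈ A, ∃! e, e ∈ M ∧ e ∈ Es ∧ v ∈ e

/-- `M` restricted to the edges of `P` with both endpoints in `A` is a
perfect matching of `A`; i.e. `M ∩ E(P ∩ A)` is a perfect matching of `P ∩ A`. -/
def WalkMConfOn (G : SimpleGraph V) (M : Set (Sym2 V)) {u v : V} (P : G.Walk u v)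
    (A : Set V) : Prop :=
  ∀ x ∈ A, ∃! e : Sym2 V, e ∈ M ∧ e ∈ P.edges ∧ (∀ y ∈ e, y ∈ A) ∧ x ∈ e

/-- The path `P` is `M`-conformal: `M ∩ E(P)` is a perfect matching of `P`. -/
def MConformalWalk (G : SimpleGraph V) (M : Set (Sym2 V)) {u v : V} (P : G.Walk u v) : Prop :=
  WalkMConfOn G M P {x | x ∈ P.support}

/-- The path `P` is internally `M`-conformal: removing both endpoints leaves
an `M`-conformal path. -/
def InternallyMConformal (G : SimpleGraph V) (M : Set (Sym2 V)) {u v : V}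
    (P : G.Walk u v) : Prop :=
  WalkMConfOn G M P {x | x ∈ P.support ∧ x ≠ u ∧ x ≠ v}

/-- The path `P` is `M`-alternating: there is a set `S` of endpoints of `P`
such that `P − S` is `M`-conformal. -/
def MAlternating (G : SimpleGraph V) (M : Set (Sym2 V)) {u v : V} (P : G.Walk u v) : Prop :=
  ∃ S ⊆ ({u, v} : Set V), WalkMConfOn G M P {x | x ∈ P.support ∧ x ∉ S}

/-- The cycle `C` is `M`-conformal: `M ∩ E(C)` is a perfect matching of `C`. -/
def MConformalCycle (G : SimpleGraph V) (M : Set (Sym2 V)) {c : V} (C : G.Walk c c) : Prop :=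
  ∀ x ∈ C.support, ∃! e, e ∈ M ∧ e ∈ C.edges ∧ x ∈ e

/-- The cycle `C` is conformal in the graph `G` with vertex set `S`:
`G − V(C)` has a perfect matching. -/
def ConformalCycleOn (G : SimpleGraph V) (S : Set V) {c : V} (C : G.Walk c c) : Prop :=
  ∃ M, IsPMOn G (S \ {x | x ∈ C.support}) M

def ConformalCycle (G : SimpleGraph V) {c : V} (C : G.Walk c c) : Prop :=
  ConformalCycleOn G Set.univ C

/-- The four vertices appear on the cycle `C` in the listed cyclic order. -/
def InCyclicOrder (G : SimpleGraph V) {c : V} (C : G.Walk c c) (s1 s2 t1 t2 : V) : Prop :=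
  ∃ n : ℕ, List.Sublist [s1, s2, t1, t2] (C.support.tail.rotate n) ∨
    List.Sublist [s1, s2, t1, t2] (C.support.tail.reverse.rotate n)

/-- The paths `P1` (from `s1` to `t1`) and `P2` (from `s2` to `t2`) form a matching
cross over the cycle `C` with respect to the perfect matching `M` of `(G, S)`. -/
def IsMatchingCrossOn (G : SimpleGraph V) (S : Set V) {c s1 t1 s2 t2 : V}
    (C : G.Walk c c) (M : Set (Sym2 V)) (P1 : G.Walk s1 t1) (P2 : G.Walk s2 t2) : Prop :=
  IsPMOn G S M ∧ [s1, s2, t1, t2].Nodup ∧ InCyclicOrder G C s1 s2 t1 t2 ∧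
    P1.IsPath ∧ P2.IsPath ∧ MAlternating G M P1 ∧ MAlternating G M P2 ∧
    (∀ x : V, x ∈ P1.support → x ∉ P2.support) ∧
    (∀ x ∈ P1.support, x ≠ s1 → x ≠ t1 → x ∉ C.support) ∧
    (∀ x ∈ P2.support, x ≠ s2 → x ≠ t2 → x ∉ C.support)

def HasMatchingCrossOn (G : SimpleGraph V) (S : Set V) {c : V} (C : G.Walk c c) : Prop :=
  ∃ (M : Set (Sym2 V)) (s1 t1 s2 t2 : V) (P1 : G.Walk s1 t1) (P2 : G.Walk s2 t2),
    IsMatchingCrossOn G S C M P1 P2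

def HasMatchingCross (G : SimpleGraph V) {c : V} (C : G.Walk c c) : Prop :=
  HasMatchingCrossOn G Set.univ C

/-- `C + P1 + P2` is a conformal subgraph of `(G, S)`. -/
def CrossConformalOn (G : SimpleGraph V) (S : Set V) {c s1 t1 s2 t2 : V}
    (C : G.Walk c c) (P1 : G.Walk s1 t1) (P2 : G.Walk s2 t2) : Prop :=
  ∃ N, IsPMOn G S N ∧
    MatchesExactly N
      ({f | f ∈ C.edges} ∪ {f | f ∈ P1.edges} ∪ {f | f ∈ P2.edges})
      ({x | x ∈ C.support} ∪ {x | x ∈ P1.support} ∪ {x | x ∈ P2.support})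

/-- There is a conformal cross over the cycle `C` in `G`. -/
def HasConformalCross (G : SimpleGraph V) {c : V} (C : G.Walk c c) : Prop :=
  ∃ (M : Set (Sym2 V)) (s1 t1 s2 t2 : V) (P1 : G.Walk s1 t1) (P2 : G.Walk s2 t2),
    IsMatchingCrossOn G Set.univ C M P1 P2 ∧ CrossConformalOn G Set.univ C P1 P2

/-- A bisubdivision of the graph `H` inside the graph `G`: every edge of `H` is replaced
by a path of odd length (i.e., subdivided an even number of times), and those paths
pairwise meet only in branch vertices. -/
structure Bisubdivision (H : SimpleGraph W) (G : SimpleGraph V) where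
  bv : W → V
  bv_inj : Function.Injective bv
  link : ∀ ⦃x y : W⦄, H.Adj x y → G.Walk (bv x) (bv y)
  link_isPath : ∀ ⦃x y : W⦄ (h : H.Adj x y), (link h).IsPath
  link_odd : ∀ ⦃x y : W⦄ (h : H.Adj x y), Odd (link h).length
  link_symm : ∀ ⦃x y : W⦄ (h : H.Adj x y), link h.symm = (link h).reverse
  link_branch : ∀ ⦃x y : W⦄ (h : H.Adj x y) (z : W), bv z ∈ (link h).support → z = x ∨ z = y
  link_meet : ∀ ⦃x y x' y' : W⦄ (h : H.Adj x y) (h' : H.Adj x' y'), s(x, y) ≠ s(x', y') →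
    ∀ v : V, v ∈ (link h).support → v ∈ (link h').support →
      (v = bv x ∨ v = bv y) ∧ (v = bv x' ∨ v = bv y')

def Bisubdivision.verts {H : SimpleGraph W} {G : SimpleGraph V}
    (L : Bisubdivision H G) : Set V :=
  {v | ∃ (x y : W) (h : H.Adj x y), v ∈ (L.link h).support}

def Bisubdivision.edgeSet {H : SimpleGraph W} {G : SimpleGraph V}
    (L : Bisubdivision H G) : Set (Sym2 V) :=
  {e | ∃ (x y : W) (h : H.Adj x y), e ∈ (L.link h).edges}

/-- The bisubdivision `L` is an `M`-conformal subgraph of `G`. -/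
def Bisubdivision.MConformal {H : SimpleGraph W} {G : SimpleGraph V}
    (L : Bisubdivision H G) (M : Set (Sym2 V)) : Prop :=
  MatchesExactly M L.edgeSet L.verts

/-- The bisubdivision `L` is a conformal subgraph of `(G, S)`. -/
def Bisubdivision.ConformalOn {H : SimpleGraph W} {G : SimpleGraph V}
    (L : Bisubdivision H G) (S : Set V) : Prop :=
  ∃ M, IsPMOn G S M ∧ L.MConformal M

abbrev K33 : SimpleGraph (Fin 3 ⊕ Fin 3) := completeBipartiteGraph (Fin 3) (Fin 3)

/-- `G` contains a conformal bisubdivision of `K_{3,3}`. -/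
def ContainsK33 (G : SimpleGraph V) : Prop :=
  ∃ L : Bisubdivision K33 G, L.ConformalOn Set.univ

def K33Free (G : SimpleGraph V) : Prop :=
  ¬ ContainsK33 G

def C4verts (a1 b1 a2 b2 : V) : Set V := {a1, b1, a2, b2}

def C4edges (a1 b1 a2 b2 : V) : Set (Sym2 V) := {s(a1, b1), s(b1, a2), s(a2, b2), s(b2, a1)}

/-- `a1 b1 a2 b2` is a cycle of length four in `G`. -/
def IsC4In (G : SimpleGraph V) (a1 b1 a2 b2 : V) : Prop :=
  [a1, b1, a2, b2].Nodup ∧ G.Adj a1 b1 ∧ G.Adj b1 a2 ∧ G.Adj a2 b2 ∧ G.Adj b2 a1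

/-- `B` is a 4-cycle sum of the graphs `Bi i` (with vertex sets `Si i`)
at the common conformal 4-cycle `a1 b1 a2 b2`. -/
def IsFourCycleSum {ℓ : ℕ} (B : SimpleGraph V) (Bi : Fin ℓ → SimpleGraph V)
    (Si : Fin ℓ → Set V) (a1 b1 a2 b2 : V) : Prop :=
  (∀ i, EdgesWithin (Bi i) (Si i)) ∧
  (∀ i, IsC4In (Bi i) a1 b1 a2 b2) ∧
  (∀ i, ∃ M, IsPMOn (Bi i) (Si i \ C4verts a1 b1 a2 b2) M) ∧
  (∀ i j, i ≠ j → Si i ∩ Si j = C4verts a1 b1 a2 b2) ∧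
  (⋃ i, Si i) = Set.univ ∧
  ∃ D ⊆ C4edges a1 b1 a2 b2, B.edgeSet = (⋃ i, (Bi i).edgeSet) \ D

/-- `B` is a maximal 4-cycle sum of the braces `Bi i` at the 4-cycle `a1 b1 a2 b2`. -/
def IsMaxFourCycleSumOfBraces {ℓ : ℕ} (B : SimpleGraph V) (Bi : Fin ℓ → SimpleGraph V)
    (Si : Fin ℓ → Set V) (a1 b1 a2 b2 : V) : Prop :=
  IsFourCycleSum B Bi Si a1 b1 a2 b2 ∧ (∀ i, IsBraceOn (Bi i) (Si i)) ∧
    ¬ ∃ ℓ' : ℕ, ℓ < ℓ' ∧ ∃ (Hi : Fin ℓ' → SimpleGraph V) (Ti : Fin ℓ' → Set V),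
      IsFourCycleSum B Hi Ti a1 b1 a2 b2 ∧ ∀ i, IsBraceOn (Hi i) (Ti i)

/-- `∂(X)`: the set of edges of `G` with exactly one endpoint in `X`. -/
def edgeCut (G : SimpleGraph V) (X : Set V) : Set (Sym2 V) :=
  {e | e ∈ G.edgeSet ∧ ∃ x y : V, e = s(x, y) ∧ x ∈ X ∧ y ∉ X}

/-- `∂(X)` is a tight cut of the graph `G` with vertex set `S`. -/
def IsTightCutOn (G : SimpleGraph V) (S X : Set V) : Prop :=
  ∀ M, IsPMOn G S M → (edgeCut G X ∩ M).ncard = 1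

def IsTightCut (G : SimpleGraph V) (X : Set V) : Prop :=
  IsTightCutOn G Set.univ X

/-- The minority of `X` with respect to the colour classes `V1`, `V2`. -/
noncomputable def minority (V1 V2 X : Set V) : Set V :=
  if (X ∩ V1).ncard < (X ∩ V2).ncard then X ∩ V1 else X ∩ V2

/-- `P1` and `P2` are `M`-alternating paths of the same type. -/
def SameType (G : SimpleGraph V) (M : Set (Sym2 V)) {s1 t1 s2 t2 : V}
    (P1 : G.Walk s1 t1) (P2 : G.Walk s2 t2) : Prop :=
  (InternallyMConformal G M P1 ∧ InternallyMConformal G M P2) ∨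
  (MConformalWalk G M P1 ∧ MConformalWalk G M P2) ∨
  ((¬ InternallyMConformal G M P1 ∧ ¬ MConformalWalk G M P1) ∧
    (¬ InternallyMConformal G M P2 ∧ ¬ MConformalWalk G M P2))

/-- There is a strong matching cross over `C` in `(G, S)` w.r.t. colour classes `V1, V2`. -/
def HasStrongMatchingCrossOn (G : SimpleGraph V) (S V1 V2 : Set V) {c : V}
    (C : G.Walk c c) : Prop :=
  ∃ (M : Set (Sym2 V)) (s1 t1 s2 t2 : V) (P1 : G.Walk s1 t1) (P2 : G.Walk s2 t2),
    IsMatchingCrossOn G S C M P1 P2 ∧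
    (V1 ∩ {s1, s2, t1, t2}).ncard = (V2 ∩ {s1, s2, t1, t2}).ncard ∧
    SameType G M P1 P2

/-- `s1 s2 t1 t2` appear in this cyclic order on the 4-cycle `a1 b1 a2 b2`. -/
def CyclicOrderC4 (a1 b1 a2 b2 s1 s2 t1 t2 : V) : Prop :=
  ∃ n : ℕ, [s1, s2, t1, t2] = [a1, b1, a2, b2].rotate n ∨
    [s1, s2, t1, t2] = [b2, a2, b1, a1].rotate n

/-- `P1, P2` form a matching cross over the 4-cycle `a1 b1 a2 b2` w.r.t. `M`. -/
def IsCrossOverC4 (G : SimpleGraph V) (M : Set (Sym2 V)) (a1 b1 a2 b2 : V)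
    {s1 t1 s2 t2 : V} (P1 : G.Walk s1 t1) (P2 : G.Walk s2 t2) : Prop :=
  [s1, s2, t1, t2].Nodup ∧ CyclicOrderC4 a1 b1 a2 b2 s1 s2 t1 t2 ∧
    P1.IsPath ∧ P2.IsPath ∧ MAlternating G M P1 ∧ MAlternating G M P2 ∧
    (∀ z : V, z ∈ P1.support → z ∉ P2.support) ∧
    (∀ z ∈ P1.support, z ≠ s1 → z ≠ t1 → z ∉ C4verts a1 b1 a2 b2) ∧
    (∀ z ∈ P2.support, z ≠ s2 → z ≠ t2 → z ∉ C4verts a1 b1 a2 b2)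

/-- The Heawood graph on `ZMod 14`. -/
def heawood : SimpleGraph (ZMod 14) :=
  SimpleGraph.fromRel fun i j => j = i + 1 ∨ (Even i.val ∧ j = i + 5)

/-- The Rotunda: three cubes glued along a common 4-cycle whose edges are then deleted. -/
def rotunda : SimpleGraph (Fin 4 ⊕ Fin 3 × Fin 4) :=
  SimpleGraph.fromRel fun x y =>
    match x, y with
    | Sum.inl j, Sum.inr p => j = p.2
    | Sum.inr p, Sum.inr q => p.1 = q.1 ∧ q.2 = p.2 + 1
    | _, _ => False

/-- `F` is an `S`-cover in `G`. -/
def IsSCover (G : SimpleGraph V) (S : Set V) (F : Set (Sym2 V)) : Prop :=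
  F ⊆ G.edgeSet ∧ (∀ e ∈ F, ∃ v ∈ S, v ∈ e) ∧ ∀ v ∈ S, ∃ e ∈ F, v ∈ e

/-- `F` is contained in some perfect matching of `G`. -/
def Extendible (G : SimpleGraph V) (F : Set (Sym2 V)) : Prop :=
  ∃ M, IsPM G M ∧ F ⊆ M

/-- `(G, S)` is an `F`-instance of 2-MLP for `(a1, a2)` and `(b1, b2)`. -/
def TwoMLPInstanceOn (G : SimpleGraph V) (S : Set V) (a1 a2 b1 b2 : V)
    (F : Set (Sym2 V)) : Prop :=
  ∃ M, IsPMOn G S M ∧ F ⊆ M ∧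
    ∃ (P1 : G.Walk a1 b1) (P2 : G.Walk a2 b2), P1.IsPath ∧ P2.IsPath ∧
      InternallyMConformal G M P1 ∧ InternallyMConformal G M P2 ∧
      ∀ x : V, x ∈ P1.support → x ∉ P2.support

/-- `B − u − v + pq`: delete the vertices `u, v` and add the edge `pq`. -/
def deleteAdd (B : SimpleGraph V) (u v p q : V) : SimpleGraph V :=
  SimpleGraph.fromRel fun x y =>
    (B.Adj x y ∨ (x = p ∧ y = q)) ∧ x ≠ u ∧ x ≠ v ∧ y ≠ u ∧ y ≠ v

/-- `B` plus two new vertices `x = Sum.inr 0` and `y = Sum.inr 1` together with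
the edges `xy, x b1, x b2, y a1, y a2`. -/
def plusXY (B : SimpleGraph V) (a1 a2 b1 b2 : V) : SimpleGraph (V ⊕ Fin 2) :=
  SimpleGraph.fromRel fun p q =>
    (∃ a b : V, p = Sum.inl a ∧ q = Sum.inl b ∧ B.Adj a b) ∨
    (p = Sum.inr 0 ∧ q = Sum.inr 1) ∨
    (p = Sum.inr 0 ∧ (q = Sum.inl b1 ∨ q = Sum.inl b2)) ∨
    (p = Sum.inr 1 ∧ (q = Sum.inl a1 ∨ q = Sum.inl a2))

/-- The endpoints `q1, q2` (on the 4-cycle) belong to the same colour class. -/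
def PrecrossDaring (V1 V2 : Set V) (q1 q2 : V) : Prop :=
  (q1 ∈ V1 ∧ q2 ∈ V1) ∨ (q1 ∈ V2 ∧ q2 ∈ V2)

/-- `(P1, P2, Q, M)` is a diffuse `C'`-`M`-precross through the 4-cycle `a1 b1 a2 b2`
in the graph `G` with vertex set `S` and colour classes `V1, V2`. -/
def DiffusePrecross (G : SimpleGraph V) (S V1 V2 : Set V) (a1 b1 a2 b2 : V)
    {c p1 q1 p2 q2 x1 x2 : V} (C' : G.Walk c c) (M : Set (Sym2 V))
    (P1 : G.Walk p1 q1) (P2 : G.Walk p2 q2) (Q : G.Walk x1 x2) : Prop :=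
  IsPMOn G S M ∧ P1.IsPath ∧ P2.IsPath ∧ Q.IsPath ∧
  MAlternating G M P1 ∧ MAlternating G M P2 ∧ MAlternating G M Q ∧
  (∀ z : V, z ∈ P1.support → z ∉ P2.support) ∧
  (∀ z : V, z ∈ P1.support → z ∉ Q.support) ∧
  (∀ z : V, z ∈ P2.support → z ∉ Q.support) ∧
  (∀ z ∈ P1.support, z ≠ p1 → z ≠ q1 → z ∉ C'.support) ∧
  (∀ z ∈ P2.support, z ≠ p2 → z ≠ q2 → z ∉ C'.support) ∧
  (∀ z ∈ Q.support, z ≠ x1 → z ≠ x2 → z ∉ C'.support) ∧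
  x1 ∈ C'.support ∧ x2 ∈ C'.support ∧
  p1 ∈ C'.support ∧ q1 ∈ C4verts a1 b1 a2 b2 ∧
  p2 ∈ C'.support ∧ q2 ∈ C4verts a1 b1 a2 b2 ∧
  (∀ Wk : G.Walk p1 p2, (∀ e ∈ Wk.edges, e ∈ C'.edges) → ∃ z ∈ Wk.support, z ∈ Q.support) ∧
  (∀ U ∈ ({V1, V2} : Set (Set V)), (q1 ∈ U ∨ q2 ∈ U) →
    ∃ q : V, (q = q1 ∨ q = q2) ∧ q ∈ U ∧ ∃ e ∈ M, e ∈ C4edges a1 b1 a2 b2 ∧ q ∈ e)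

/-- A daring diffuse precross is successful. -/
def PrecrossSuccessful (G : SimpleGraph V) (V1 V2 : Set V) (M : Set (Sym2 V))
    {p1 q1 p2 q2 : V} (P1 : G.Walk p1 q1) (P2 : G.Walk p2 q2) : Prop :=
  PrecrossDaring V1 V2 q1 q2 ∧
  ((InternallyMConformal G M P1 ∧ MConformalWalk G M P2) ∨
   (InternallyMConformal G M P2 ∧ MConformalWalk G M P1) ∨
   (Even P1.length ∧ Even P2.length ∧
     ((∃ e ∈ M, e ∈ P1.edges ∧ p1 ∈ e) ↔ ¬ ∃ e ∈ M, e ∈ P2.edges ∧ p2 ∈ e)))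

/-!
Since `C' ≠ C` are both cycles, `C'` must use the extra edge `e`, and `C' - e` is a path in `C`.
Hence a cyclic order on `C'` is also one on `C`, and `e`, joining consecutive vertices of `C'`, lies
on neither `L` nor `R`, whose ends separate each other. Now `L` and `R` join crossing pairs of
vertices of `C`, but may meet `C` on the way. If `L` passes through a vertex `w` of `C`, then one of
the two parts into which `w` divides `L` still has ends separated by those of `R`. Shrinking `L` and
then `R` in this way ends with a cross over `C`. Alternation survives because an inner vertex of the
shrunken path keeps both its path edges.
-/

section CyclicSequences

open scoped List

variable {α : Type*} {a b c d w : α} {l m n s t : List α}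

theorem isRotated_iff_exists_append : l ~r m ↔ ∃ l₁ l₂, l = l₁ ++ l₂ ∧ m = l₂ ++ l₁ := by
  constructor
  · intro h
    obtain ⟨k, hk, rfl⟩ := List.isRotated_iff_mod.1 h
    exact ⟨l.take k, l.drop k, (List.take_append_drop k l).symm,
      List.rotate_eq_drop_append_take hk⟩
  · rintro ⟨l₁, l₂, rfl, rfl⟩
    exact List.isRotated_append

theorem exists_isRotated_sublist (hs : s <+ m) (h : l ~r m) : ∃ t, s ~r t ∧ t <+ l := by
  obtain ⟨l₁, l₂, rfl, rfl⟩ := isRotated_iff_exists_append.1 h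
  obtain ⟨s₂, s₁, rfl, h₂, h₁⟩ := List.sublist_append_iff.1 hs
  exact ⟨s₁ ++ s₂, List.isRotated_append, h₁.append h₂⟩

theorem exists_sublist_isRotated (h : s ~r t) (ht : t <+ l) : ∃ m, l ~r m ∧ s <+ m := by
  obtain ⟨s₁, s₂, rfl, rfl⟩ := isRotated_iff_exists_append.1 h
  obtain ⟨l₂, l₁, rfl, h₂, h₁⟩ := List.append_sublist_iff.1 ht
  exact ⟨l₁ ++ l₂, List.isRotated_append, h₁.append h₂⟩

/-- The lists `l` and `m` read the same cyclic sequence, from possibly different starting points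
and in possibly opposite directions. -/
def DihedralEquiv (l m : List α) : Prop :=
  l ~r m ∨ l.reverse ~r m

namespace DihedralEquiv

theorem append_comm (l m : List α) : DihedralEquiv (l ++ m) (m ++ l) :=
  .inl List.isRotated_append

theorem reverse_right (h : DihedralEquiv l m) : DihedralEquiv l m.reverse :=
  h.elim (fun h ↦ .inr h.reverse) fun h ↦ .inl (List.isRotated_reverse_comm_iff.1 h)

theorem symm (h : DihedralEquiv l m) : DihedralEquiv m l :=
  h.imp List.IsRotated.symm fun h ↦ (List.isRotated_reverse_comm_iff.1 h).symm

theorem trans (h : DihedralEquiv l m) (h' : DihedralEquiv m n) : DihedralEquiv l n := by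
  rcases h with h | h <;> rcases h' with h' | h'
  · exact .inl (h.trans h')
  · exact .inr (h.reverse.trans h')
  · exact .inr (h.trans h')
  · exact .inl ((List.isRotated_reverse_comm_iff.1 h).trans h')

theorem perm (h : DihedralEquiv l m) : l ~ m :=
  h.elim List.IsRotated.perm fun h ↦ l.reverse_perm.symm.trans h.perm

theorem exists_sublist (h : DihedralEquiv l m) (hs : s <+ m) :
    ∃ t, DihedralEquiv s t ∧ t <+ l := by
  rcases h with h | h
  · obtain ⟨t, hst, ht⟩ := exists_isRotated_sublist hs h
    exact ⟨t, .inl hst, ht⟩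
  · obtain ⟨t, hst, ht⟩ := exists_isRotated_sublist hs h
    exact ⟨t.reverse, .inr hst.reverse, List.reverse_sublist.1 (by rwa [List.reverse_reverse])⟩

end DihedralEquiv

/-- The entries of `s` occur in `l` in the cyclic order in which `s` lists them, where both the
starting point and the direction in which `l` is read may be chosen freely. -/
def CyclicSublist (s l : List α) : Prop :=
  ∃ m, DihedralEquiv l m ∧ s <+ m

theorem DihedralEquiv.cyclicSublist (h : DihedralEquiv l m) : CyclicSublist l m :=
  ⟨l, h.symm, List.Sublist.refl l⟩

namespace CyclicSublist

theorem exists_dihedralEquiv_sublist (h : CyclicSublist s l) :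
    ∃ t, DihedralEquiv s t ∧ t <+ l :=
  let ⟨_, hlm, hs⟩ := h
  hlm.exists_sublist hs

theorem of_dihedralEquiv (h : DihedralEquiv s t) (ht : t <+ l) : CyclicSublist s l := by
  rcases h with h | h
  · obtain ⟨m, hlm, hm⟩ := exists_sublist_isRotated h ht
    exact ⟨m, .inl hlm, hm⟩
  · obtain ⟨m, hlm, hm⟩ := exists_sublist_isRotated h ht
    exact ⟨m.reverse, .inr hlm.reverse, List.reverse_sublist.1 (by rwa [List.reverse_reverse])⟩

theorem trans (h : CyclicSublist s l) (h' : CyclicSublist l m) : CyclicSublist s m := by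
  obtain ⟨t, hst, htl⟩ := h.exists_dihedralEquiv_sublist
  obtain ⟨n, hmn, hln⟩ := h'
  obtain ⟨n', hnn', hsn'⟩ := of_dihedralEquiv hst (htl.trans hln)
  exact ⟨n', hmn.trans hnn', hsn'⟩

theorem rotate (h : CyclicSublist [a, b, c, d] l) : CyclicSublist [b, c, d, a] l :=
  (DihedralEquiv.append_comm [b, c, d] [a]).cyclicSublist.trans h

theorem nodup (h : CyclicSublist s l) (hl : l.Nodup) : s.Nodup :=
  let ⟨_, hlm, hs⟩ := h
  (hlm.perm.nodup_iff.1 hl).sublist hs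

theorem exists_cons (h : CyclicSublist (a :: s) l) :
    ∃ t, DihedralEquiv l (a :: t) ∧ s <+ t := by
  obtain ⟨m, hlm, hm⟩ := h
  obtain ⟨m₁, m₂, rfl, ha, hs⟩ := List.cons_sublist_iff.1 hm
  obtain ⟨p, q, rfl⟩ := List.append_of_mem ha
  refine ⟨q ++ m₂ ++ p, hlm.trans ?_, (hs.trans (List.sublist_append_right _ _)).trans
    (List.sublist_append_left _ _)⟩
  simpa using DihedralEquiv.append_comm p (a :: (q ++ m₂))

theorem exists_triple_sublist (h : CyclicSublist [a, c, b, d] l) :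
    ∃ p r, [p, a, r] <+ l ∨ [p, b, r] <+ l := by
  obtain ⟨t, hst, ht⟩ := h.exists_dihedralEquiv_sublist
  suffices [c, a, d] <+ t ∨ [d, a, c] <+ t ∨ [c, b, d] <+ t ∨ [d, b, c] <+ t by
    grind [List.Sublist.trans]
  rcases hst with h | h
  · have hmem : t ∈ [[a, c, b, d], [c, b, d, a], [b, d, a, c], [d, a, c, b]] :=
      List.mem_cyclicPermutations_iff.2 h.symm
    simp only [List.mem_cons, List.not_mem_nil, or_false] at hmem
    rcases hmem with rfl | rfl | rfl | rfl <;> simp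
  · have hmem : t ∈ [[d, b, c, a], [b, c, a, d], [c, a, d, b], [a, d, b, c]] :=
      List.mem_cyclicPermutations_iff.2 h.symm
    simp only [List.mem_cons, List.not_mem_nil, or_false] at hmem
    rcases hmem with rfl | rfl | rfl | rfl <;> simp

end CyclicSublist

theorem triple_sublist_iff : [b, d, a] <+ t ↔ ∃ p q, t = p ++ d :: q ∧ b ∈ p ∧ a ∈ q := by
  constructor
  · intro h
    obtain ⟨t₁, t₂, rfl, hb, h₂⟩ := List.cons_sublist_iff.1 h
    obtain ⟨t₃, t₄, rfl, hd, ha⟩ := List.cons_sublist_iff.1 h₂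
    obtain ⟨p, q, rfl⟩ := List.append_of_mem hd
    exact ⟨t₁ ++ p, q ++ t₄, by simp, List.mem_append_left _ hb,
      List.mem_append_right _ (List.singleton_sublist.1 ha)⟩
  · rintro ⟨p, q, rfl, hb, ha⟩
    exact (List.singleton_sublist.2 hb).append ((List.singleton_sublist.2 ha).cons_cons d)

theorem triple_sublist_replace (h : [b, d, a] <+ t) (hw : w ∈ t) (hwd : w ≠ d) :
    [w, d, a] <+ t ∨ [b, d, w] <+ t := by
  obtain ⟨p, q, rfl, hb, ha⟩ := triple_sublist_iff.1 h
  rcases List.mem_append.1 hw with hwp | hwq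
  · exact .inl (triple_sublist_iff.2 ⟨p, q, rfl, hwp, ha⟩)
  · exact .inr (triple_sublist_iff.2 ⟨p, q, rfl, hb, (List.mem_cons.1 hwq).resolve_left hwd⟩)

/-- Picture `ab` and `cd` as crossing chords of a circle: a point `w` off the chord `cd` lies on the
same side of it as `a` or as `b`, so the chord from `w` to the other one still crosses `cd`. -/
theorem CyclicSublist.replace_first_or_third (h : CyclicSublist [a, c, b, d] l) (hw : w ∈ l)
    (hwc : w ≠ c) (hwd : w ≠ d) :
    CyclicSublist [a, c, w, d] l ∨ CyclicSublist [w, c, b, d] l := by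
  obtain ⟨t, hlt, ht⟩ := h.rotate.exists_cons
  have hwt : w ∈ t := (List.mem_cons.1 (hlt.perm.mem_iff.1 hw)).resolve_left hwc
  rcases triple_sublist_replace ht hwt hwd with h | h
  · exact .inl (CyclicSublist.rotate (.rotate (.rotate ⟨_, hlt, h.cons_cons c⟩)))
  · exact .inr (CyclicSublist.rotate (.rotate (.rotate ⟨_, hlt, h.cons_cons c⟩)))

end CyclicSequences

section Walks

variable {G : SimpleGraph V}

theorem notMem_ends_and_mem_edges_of_isSubwalk {u v a b z : V} {P : G.Walk u v} {Q : G.Walk a b}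
    (hP : P.IsPath) (hQ : Q.IsSubwalk P) (hz : z ∈ Q.support) (hzab : z ∉ ({a, b} : Set V)) :
    z ∉ ({u, v} : Set V) ∧ ∀ e ∈ P.edges, z ∈ e → e ∈ Q.edges := by
  obtain ⟨A, B, rfl⟩ := hQ
  simp only [Set.mem_insert_iff, Set.mem_singleton_iff, not_or] at hzab ⊢
  have hzA : z ∉ A.support := fun hzA ↦
    hP.of_append_left.ne_of_mem_support_of_append hzab.1 hzA hz rfl
  have hzB : z ∉ B.support := fun hzB ↦
    hP.ne_of_mem_support_of_append hzab.2 (Walk.support_subset_support_append_right A Q hz) hzB rfl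
  refine ⟨⟨fun h ↦ hzA (h ▸ A.start_mem_support), fun h ↦ hzB (h ▸ B.end_mem_support)⟩, ?_⟩
  intro e he hze
  rw [Walk.edges_append, Walk.edges_append, List.mem_append, List.mem_append] at he
  exact (he.resolve_right fun h ↦ hzB (Walk.mem_support_of_mem_edges h hze)).resolve_left
    fun h ↦ hzA (Walk.mem_support_of_mem_edges h hze)

theorem mem_tail_support_iff {c z : V} {C : G.Walk c c} (hC : ¬C.Nil) :
    z ∈ C.support.tail ↔ z ∈ C.support := by
  refine ⟨List.mem_of_mem_tail, fun hz ↦ ?_⟩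
  rcases C.mem_support_iff.1 hz with rfl | hz
  · exact Walk.end_mem_tail_support hC
  · exact hz

theorem exists_eq_append_of_edges_subset {u v w : V} {P : G.Walk u v} {Q : G.Walk u w}
    (hP : P.IsPath) (hQ : Q.IsPath) (hsub : Q.edges ⊆ P.edges) :
    ∃ R : G.Walk w v, P = Q.append R := by
  induction P generalizing w with
  | nil =>
    cases Q with
    | nil => exact ⟨.nil, rfl⟩
    | cons h Q => simp at hsub
  | @cons u p v h P ih =>
    cases Q with
    | nil => exact ⟨.cons h P, rfl⟩
    | @cons _ q _ h' Q =>
      obtain rfl : q = p := by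
        simpa using hP.eq_snd_of_mem_edges (hsub (by simp) : s(u, q) ∈ _)
      have hu : u ∉ Q.support := ((Walk.cons_isPath_iff h' Q).1 hQ).2
      have hQP : Q.edges ⊆ P.edges := by
        refine fun e he ↦ (List.mem_cons.1 (hsub (List.mem_cons_of_mem _ he))).resolve_left ?_
        rintro rfl
        exact hu (Q.fst_mem_support_of_mem_edges he)
      obtain ⟨R, rfl⟩ := ih hP.of_cons hQ.of_cons hQP
      exact ⟨R, rfl⟩

theorem isPath_append_of_isCycle {a b c : V} {h : G.Adj a b} {P : G.Walk c a} {Q : G.Walk b c}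
    (hC : ((P.append h.toWalk).append Q).IsCycle) :
    (Q.append P).IsPath ∧
      (∀ f, f ∈ (Q.append P).edges ↔ f ∈ ((P.append h.toWalk).append Q).edges ∧ f ≠ s(a, b)) ∧
      DihedralEquiv ((P.append h.toWalk).append Q).support.tail (Q.append P).support := by
  have hd : DihedralEquiv ((P.append h.toWalk).append Q).support.tail (Q.append P).support := by
    rw [← Walk.append_assoc, Walk.tail_support_append, Walk.support_append Q P]
    exact .append_comm _ _
  refine ⟨?_, fun f ↦ ?_, hd⟩
  · rw [Walk.isPath_def, ← hd.perm.nodup_iff]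
    exact hC.support_nodup
  · have hnodup := hC.isTrail.edges_nodup
    simp only [Walk.edges_append, Walk.edges_cons, Walk.edges_nil, List.nodup_append,
      List.mem_append, List.mem_cons, List.not_mem_nil, or_false] at hnodup ⊢
    grind

theorem exists_isPath_of_isCycle_of_mem_edges {a b c : V} {C : G.Walk c c} (hC : C.IsCycle)
    (he : s(a, b) ∈ C.edges) :
    ∃ Q : G.Walk b a, Q.IsPath ∧ (∀ f, f ∈ Q.edges ↔ f ∈ C.edges ∧ f ≠ s(a, b)) ∧
      DihedralEquiv C.support.tail Q.support := by
  have hadj := C.adj_of_mem_edges he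
  rcases (Walk.isSubwalk_toWalk_iff_mem_edges hadj).2 he with
    ⟨P, Q, rfl⟩ | ⟨P, Q, rfl⟩
  · exact ⟨Q.append P, isPath_append_of_isCycle hC⟩
  · obtain ⟨hpath, hedges, hd⟩ := isPath_append_of_isCycle hC
    refine ⟨(Q.append P).reverse, hpath.reverse, fun f ↦ ?_, ?_⟩
    · rw [Walk.edges_reverse, List.mem_reverse, hedges, Sym2.eq_swap]
    · rw [Walk.support_reverse]
      exact hd.reverse_right

theorem exists_mem_edges_notMem_edges {a b c : V} {C : G.Walk c c} (hC : C.IsCycle)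
    (ha : a ∈ C.support) {Q : G.Walk a b} (hQ : Q.IsPath) :
    ∃ z, s(a, z) ∈ C.edges ∧ s(a, z) ∉ Q.edges := by
  obtain ⟨p, q, hpq, hN⟩ := Set.ncard_eq_two.1 (hC.ncard_neighborSet_toSubgraph_eq_two ha)
  have hmem : ∀ z, z ∈ ({p, q} : Set V) → s(a, z) ∈ C.edges := fun z hz ↦
    Walk.adj_toSubgraph_iff_mem_edges.1 (hN ▸ hz : z ∈ C.toSubgraph.neighborSet a)
  by_contra! hsub
  exact hpq ((hQ.eq_snd_of_mem_edges (hsub p (hmem p (by simp)))).trans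
    (hQ.eq_snd_of_mem_edges (hsub q (hmem q (by simp)))).symm)

theorem cyclicSublist_support_of_edges_subset {a b c : V} {C : G.Walk c c} (hC : C.IsCycle)
    (ha : a ∈ C.support) {Q : G.Walk a b} (hQ : Q.IsPath) (hsub : Q.edges ⊆ C.edges) :
    CyclicSublist Q.support C.support.tail := by
  obtain ⟨z, hzC, hzQ⟩ := exists_mem_edges_notMem_edges hC ha hQ
  rw [Sym2.eq_swap] at hzC hzQ
  obtain ⟨P, hP, hPedges, hd⟩ := exists_isPath_of_isCycle_of_mem_edges hC hzC
  obtain ⟨R, rfl⟩ := exists_eq_append_of_edges_subset hP hQ fun f hf ↦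
    (hPedges f).2 ⟨hsub hf, fun hfz ↦ hzQ (hfz ▸ hf)⟩
  exact ⟨_, hd, (Walk.support_prefix_support_append Q R).sublist⟩

theorem edges_subset_edges_of_isCycle {c c' : V} {C : G.Walk c c} {C' : G.Walk c' c'}
    (hC : C.IsCycle) (hC' : C'.IsCycle) (hsub : C'.edges ⊆ C.edges) : C.edges ⊆ C'.edges := by
  have he := C'.mk_start_snd_mem_edges hC'.not_nil
  obtain ⟨P, hP, hPedges, -⟩ := exists_isPath_of_isCycle_of_mem_edges hC (hsub he)
  obtain ⟨Q, hQ, hQedges, -⟩ := exists_isPath_of_isCycle_of_mem_edges hC' he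
  obtain ⟨R, rfl⟩ := exists_eq_append_of_edges_subset hP hQ fun f hf ↦
    (hPedges f).2 (((hQedges f).1 hf).imp_left fun h ↦ hsub h)
  obtain rfl := Walk.eq_nil_iff_nil.2 (Walk.isPath_iff_nil.1 hP.of_append_right)
  intro f hf
  by_cases hfe : f = s(c', C'.snd)
  · exact hfe ▸ he
  · exact ((hQedges f).1 (by simpa using (hPedges f).2 ⟨hf, hfe⟩)).1

theorem cyclicSublist_tail_support_of_edges_subset {c c' : V} {C : G.Walk c c} {C' : G.Walk c' c'}
    (hC : C.IsCycle) (hC' : C'.IsCycle) {e : Sym2 V} (he : e ∈ C'.edges)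
    (hsub : ∀ f ∈ C'.edges, f ∈ C.edges ∨ f = e) :
    CyclicSublist C'.support.tail C.support.tail := by
  induction e with | _ a b
  obtain ⟨Q, hQ, hQedges, hd⟩ := exists_isPath_of_isCycle_of_mem_edges hC' he
  have hQC : Q.edges ⊆ C.edges := fun f hf ↦
    (hsub f ((hQedges f).1 hf).1).resolve_right ((hQedges f).1 hf).2
  have hQnil : ¬Q.Nil := Walk.not_nil_of_ne (C'.adj_of_mem_edges he).ne'
  have hbC : b ∈ C.support := C.fst_mem_support_of_mem_edges (hQC (Q.mk_start_snd_mem_edges hQnil))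
  exact hd.cyclicSublist.trans (cyclicSublist_support_of_edges_subset hC hbC hQ hQC)

theorem ne_start_of_pair_sublist_support {a b p q : V} {Q : G.Walk a b} (hQ : Q.IsPath)
    (h : [p, q].Sublist Q.support) : q ≠ a := by
  rintro rfl
  have hnodup := hQ.support_nodup
  rw [← Q.cons_tail_support, List.nodup_cons] at hnodup
  exact hnodup.1 (h.tail.subset (List.mem_singleton_self q))

theorem ne_end_of_pair_sublist_support {a b p q : V} {Q : G.Walk a b} (hQ : Q.IsPath)
    (h : [p, q].Sublist Q.support) : p ≠ b :=
  ne_start_of_pair_sublist_support hQ.reverse (by simpa using h.reverse)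

theorem notMem_edges_of_cyclicSublist {c s₁ s₂ t₁ t₂ : V} {C : G.Walk c c} (hC : C.IsCycle)
    (h : CyclicSublist [s₁, s₂, t₁, t₂] C.support.tail) : s(s₁, t₁) ∉ C.edges := by
  intro he
  obtain ⟨Q, hQ, -, hd⟩ := exists_isPath_of_isCycle_of_mem_edges hC he
  obtain ⟨p, r, hs | ht⟩ := (h.trans hd.cyclicSublist).exists_triple_sublist
  · exact ne_end_of_pair_sublist_support hQ ((List.sublist_cons_self _ _).trans hs) rfl
  · exact ne_start_of_pair_sublist_support hQ ((List.take_sublist 2 _).trans ht) rfl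

theorem exists_isSubwalk_forall_notMem {u v : V} {r : V → V → Prop} {X : Set V} (P : G.Walk u v)
    (huv : r u v) (hr : ∀ a b, r a b → ∀ w ∈ P.support, w ∈ X → r a w ∨ r w b) :
    ∃ (a b : V) (Q : G.Walk a b), Q.IsSubwalk P ∧ r a b ∧
      ∀ z ∈ Q.support, z ≠ a → z ≠ b → z ∉ X := by
  by_cases h : ∀ z ∈ P.support, z ≠ u → z ≠ v → z ∉ X
  · exact ⟨u, v, P, P.isSubwalk_rfl, huv, h⟩
  push Not at h
  obtain ⟨w, hw, hwu, hwv, hwX⟩ := h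
  obtain ⟨A, B, rfl⟩ := Walk.mem_support_iff_exists_append.1 hw
  rcases hr u v huv w hw hwX with huw | hwv
  · have hAP : A.IsSubwalk (A.append B) := Walk.isSubwalk_of_append_left rfl
    have : A.length < (A.append B).length := by
      have := Walk.not_nil_iff_lt_length.1 (Walk.not_nil_of_ne hwv : ¬B.Nil)
      rw [Walk.length_append]
      lia
    obtain ⟨a, b, Q, hQ, hab⟩ := exists_isSubwalk_forall_notMem A huw fun a b hab w hw ↦
      hr a b hab w (hAP.support_subset hw)
    exact ⟨a, b, Q, hQ.trans hAP, hab⟩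
  · have hBP : B.IsSubwalk (A.append B) := Walk.isSubwalk_of_append_right rfl
    have : B.length < (A.append B).length := by
      have := Walk.not_nil_iff_lt_length.1 (Walk.not_nil_of_ne hwu.symm : ¬A.Nil)
      rw [Walk.length_append]
      lia
    obtain ⟨a, b, Q, hQ, hab⟩ := exists_isSubwalk_forall_notMem B hwv fun a b hab w hw ↦
      hr a b hab w (hBP.support_subset hw)
    exact ⟨a, b, Q, hQ.trans hBP, hab⟩
termination_by P.length

end Walks

section MatchingCrosses

variable {G : SimpleGraph V} {M : Set (Sym2 V)}

theorem inCyclicOrder_iff_cyclicSublist {c s₁ s₂ t₁ t₂ : V} {C : G.Walk c c} :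
    InCyclicOrder G C s₁ s₂ t₁ t₂ ↔ CyclicSublist [s₁, s₂, t₁, t₂] C.support.tail := by
  constructor
  · rintro ⟨n, h | h⟩
    · exact ⟨_, .inl ⟨n, rfl⟩, h⟩
    · exact ⟨_, .inr ⟨n, rfl⟩, h⟩
  · rintro ⟨_, ⟨n, rfl⟩ | ⟨n, rfl⟩, h⟩
    · exact ⟨n, .inl h⟩
    · exact ⟨n, .inr h⟩

theorem MAlternating.of_isSubwalk {u v a b : V} {P : G.Walk u v} {Q : G.Walk a b}
    (hP : P.IsPath) (h : MAlternating G M P) (hQ : Q.IsSubwalk P) : MAlternating G M Q := by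
  obtain ⟨S, hS, hM⟩ := h
  let A := {z | z ∈ P.support ∧ z ∉ S}
  let K := {z | ∃ e ∈ M, e ∈ Q.edges ∧ (∀ y ∈ e, y ∈ A) ∧ z ∈ e}
  have hKA : K ⊆ A := fun z ⟨_, _, _, heA, hz⟩ ↦ heA z hz
  have hKQ : {z | z ∈ Q.support ∧ z ∉ {a, b} \ K} = K := by
    ext z
    refine ⟨fun ⟨hzQ, hz⟩ ↦ ?_, fun hz ↦ ⟨?_, fun h ↦ h.2 hz⟩⟩
    · by_cases hzab : z ∈ ({a, b} : Set V)
      · exact by_contra fun hzK ↦ hz ⟨hzab, hzK⟩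
      obtain ⟨hzuv, hedges⟩ := notMem_ends_and_mem_edges_of_isSubwalk hP hQ hzQ hzab
      obtain ⟨e, ⟨heM, heP, heA, hze⟩, -⟩ :=
        hM z ⟨hQ.support_subset hzQ, fun hzS ↦ hzuv (hS hzS)⟩
      exact ⟨e, heM, hedges e heP hze, heA, hze⟩
    · obtain ⟨e, -, heQ, -, hze⟩ := hz
      exact Walk.mem_support_of_mem_edges heQ hze
  refine ⟨{a, b} \ K, Set.sdiff_subset, ?_⟩
  rw [hKQ]
  intro z hz
  obtain ⟨e, heM, heQ, heA, hze⟩ := hz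
  refine ⟨e, ⟨heM, heQ, fun y hy ↦ ⟨e, heM, heQ, heA, hy⟩, hze⟩, ?_⟩
  rintro f ⟨hfM, hfQ, hfK, hzf⟩
  exact (hM z (heA z hze)).unique
    ⟨hfM, hQ.edges_subset hfQ, fun y hy ↦ hKA (hfK y hy), hzf⟩
    ⟨heM, hQ.edges_subset heQ, heA, hze⟩

theorem MAlternating.reverse {u v : V} {P : G.Walk u v} (h : MAlternating G M P) :
    MAlternating G M P.reverse := by
  obtain ⟨S, hS, hM⟩ := h
  refine ⟨S, Set.pair_comm u v ▸ hS, ?_⟩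
  simpa only [WalkMConfOn, Walk.support_reverse, Walk.edges_reverse, List.mem_reverse] using hM

theorem IsMatchingCrossOn.rotate {S : Set V} {c s₁ t₁ s₂ t₂ : V} {C : G.Walk c c}
    {P₁ : G.Walk s₁ t₁} {P₂ : G.Walk s₂ t₂} (h : IsMatchingCrossOn G S C M P₁ P₂) :
    IsMatchingCrossOn G S C M P₂ P₁.reverse := by
  obtain ⟨hM, hnodup, hord, hP₁, hP₂, hM₁, hM₂, hdisj, hC₁, hC₂⟩ := h
  refine ⟨hM, ?_, inCyclicOrder_iff_cyclicSublist.2 (inCyclicOrder_iff_cyclicSublist.1 hord).rotate,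
    hP₂, hP₁.reverse, hM₂, hM₁.reverse, ?_, hC₂, ?_⟩
  · exact (List.nodup_rotate (n := 1)).2 hnodup
  · simpa using fun x hx₂ hx₁ ↦ hdisj x hx₁ hx₂
  · simpa using fun x hx hxt hxs ↦ hC₁ x hx hxs hxt

theorem IsMatchingCrossOn.notMem_edges_left {S : Set V} {c s₁ t₁ s₂ t₂ : V} {C : G.Walk c c}
    {P₁ : G.Walk s₁ t₁} {P₂ : G.Walk s₂ t₂} (h : IsMatchingCrossOn G S C M P₁ P₂)
    (hC : C.IsCycle) {e : Sym2 V} (he : e ∈ C.edges) : e ∉ P₁.edges := by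
  obtain ⟨-, -, hord, -, -, -, -, -, hC₁, -⟩ := h
  induction e with | _ x y
  intro heP
  have hx : x = s₁ ∨ x = t₁ := by
    by_contra! hx
    exact hC₁ x (P₁.fst_mem_support_of_mem_edges heP) hx.1 hx.2 (C.fst_mem_support_of_mem_edges he)
  have hy : y = s₁ ∨ y = t₁ := by
    by_contra! hy
    exact hC₁ y (P₁.snd_mem_support_of_mem_edges heP) hy.1 hy.2 (C.snd_mem_support_of_mem_edges he)
  have hxy : x ≠ y := (C.adj_of_mem_edges he).ne
  have hst : s(x, y) = s(s₁, t₁) := by grind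
  exact notMem_edges_of_cyclicSublist hC (inCyclicOrder_iff_cyclicSublist.1 hord) (hst ▸ he)

theorem IsMatchingCrossOn.notMem_edges_right {S : Set V} {c s₁ t₁ s₂ t₂ : V} {C : G.Walk c c}
    {P₁ : G.Walk s₁ t₁} {P₂ : G.Walk s₂ t₂} (h : IsMatchingCrossOn G S C M P₁ P₂)
    (hC : C.IsCycle) {e : Sym2 V} (he : e ∈ C.edges) : e ∉ P₂.edges :=
  h.rotate.notMem_edges_left hC he

theorem exists_isMatchingCrossOn_isSubwalk {S : Set V} {c s₁ t₁ s₂ t₂ : V} {C : G.Walk c c}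
    {L : G.Walk s₁ t₁} {R : G.Walk s₂ t₂} (hM : IsPMOn G S M) (hC : C.IsCycle)
    (hord : CyclicSublist [s₁, s₂, t₁, t₂] C.support.tail) (hL : L.IsPath) (hR : R.IsPath)
    (hML : MAlternating G M L) (hMR : MAlternating G M R)
    (hdisj : ∀ x ∈ L.support, x ∉ R.support) :
    ∃ (s₁' t₁' s₂' t₂' : V) (P₁ : G.Walk s₁' t₁') (P₂ : G.Walk s₂' t₂'),
      IsMatchingCrossOn G S C M P₁ P₂ ∧ P₁.IsSubwalk L ∧ P₂.IsSubwalk R := by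
  have hreplace : ∀ {a b c d w}, CyclicSublist [a, c, b, d] C.support.tail → w ∈ C.support →
      w ≠ c → w ≠ d → CyclicSublist [a, c, w, d] C.support.tail ∨
        CyclicSublist [w, c, b, d] C.support.tail := fun h hw ↦
    h.replace_first_or_third ((mem_tail_support_iff hC.not_nil).2 hw)
  obtain ⟨a, b, P₁, hP₁, hab, hPC₁⟩ := exists_isSubwalk_forall_notMem L hord
    (r := fun a b ↦ CyclicSublist [a, s₂, b, t₂] C.support.tail) (X := {x | x ∈ C.support})
    fun a b hab w hw hwC ↦ hreplace hab hwC
      (fun h ↦ hdisj w hw (h ▸ R.start_mem_support)) (fun h ↦ hdisj w hw (h ▸ R.end_mem_support))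
  have hdisj₁ : ∀ x ∈ P₁.support, x ∉ R.support := fun x hx ↦ hdisj x (hP₁.support_subset hx)
  obtain ⟨c, d, P₂, hP₂, hcd, hPC₂⟩ := exists_isSubwalk_forall_notMem R hab.rotate
    (r := fun c d ↦ CyclicSublist [c, b, d, a] C.support.tail) (X := {x | x ∈ C.support})
    fun c d hcd w hw hwC ↦ hreplace hcd hwC
      (fun h ↦ hdisj₁ b P₁.end_mem_support (h ▸ hw))
      (fun h ↦ hdisj₁ a P₁.start_mem_support (h ▸ hw))
  have hcross : CyclicSublist [a, c, b, d] C.support.tail := hcd.rotate.rotate.rotate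
  exact ⟨a, b, c, d, P₁, P₂, ⟨hM, hcross.nodup hC.support_nodup,
    inCyclicOrder_iff_cyclicSublist.2 hcross, Walk.isPath_of_isSubwalk hP₁ hL,
    Walk.isPath_of_isSubwalk hP₂ hR, hML.of_isSubwalk hL hP₁, hMR.of_isSubwalk hR hP₂,
    fun x hx₁ hx₂ ↦ hdisj₁ x hx₁ (hP₂.support_subset hx₂), hPC₁, hPC₂⟩, hP₁, hP₂⟩

end MatchingCrosses

theorem statement_0_general {G : SimpleGraph V} {S : Set V} {c c' : V} {C : G.Walk c c}
    {C' : G.Walk c' c'} (hC : C.IsCycle) (hC' : C'.IsCycle)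
    (hne : {f | f ∈ C'.edges} ≠ {f | f ∈ C.edges}) {e : Sym2 V}
    (hsub : ∀ f ∈ C'.edges, f ∈ C.edges ∨ f = e) (hcross : HasMatchingCrossOn G S C') :
    ∃ (M : Set (Sym2 V)) (s₁ t₁ s₂ t₂ : V) (P₁ : G.Walk s₁ t₁) (P₂ : G.Walk s₂ t₂),
      IsMatchingCrossOn G S C M P₁ P₂ ∧ e ∉ P₁.edges ∧ e ∉ P₂.edges := by
  have he : e ∈ C'.edges := by
    by_contra he
    have hsub' : C'.edges ⊆ C.edges := fun f hf ↦
      (hsub f hf).resolve_right fun hfe ↦ he (hfe ▸ hf)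
    exact hne (Set.Subset.antisymm hsub' (edges_subset_edges_of_isCycle hC hC' hsub'))
  obtain ⟨M, s₁, t₁, s₂, t₂, L, R, hLR⟩ := hcross
  have heL : e ∉ L.edges := hLR.notMem_edges_left hC' he
  have heR : e ∉ R.edges := hLR.notMem_edges_right hC' he
  obtain ⟨hM, -, hord, hL, hR, hML, hMR, hdisj, -, -⟩ := hLR
  obtain ⟨s₁', t₁', s₂', t₂', P₁, P₂, hP, hP₁, hP₂⟩ := exists_isMatchingCrossOn_isSubwalk hM hC
    ((inCyclicOrder_iff_cyclicSublist.1 hord).trans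
      (cyclicSublist_tail_support_of_edges_subset hC hC' he hsub)) hL hR hML hMR hdisj
  exact ⟨M, s₁', t₁', s₂', t₂', P₁, P₂, hP,
    fun h ↦ heL (hP₁.edges_subset h), fun h ↦ heR (hP₂.edges_subset h)⟩

/-- extending a matching cross over `C' ⊆ C + e` to a matching cross
over `C` avoiding `e`. -/
theorem statement_0 {V : Type*} [Fintype V] [DecidableEq V] (B : SimpleGraph V)
    (hbip : IsBipartite B) (hbrace : IsBrace B)
    {c c' : V} (C : B.Walk c c) (C' : B.Walk c' c')
    (hC : C.IsCycle) (hC' : C'.IsCycle)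
    (hCconf : ConformalCycle B C) (hC'conf : ConformalCycle B C')
    (hne : {f | f ∈ C'.edges} ≠ {f | f ∈ C.edges})
    (x y : V) (hxy : B.Adj x y) (hnotC : s(x, y) ∉ C.edges)
    (hxC : x ∈ C.support) (hyC : y ∈ C.support)
    (hsub : ∀ f ∈ C'.edges, f ∈ C.edges ∨ f = s(x, y))
    (hcross : HasMatchingCross B C') :
    ∃ (M : Set (Sym2 V)) (s1 t1 s2 t2 : V) (P1 : B.Walk s1 t1) (P2 : B.Walk s2 t2),
      IsMatchingCrossOn B Set.univ C M P1 P2 ∧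
      s(x, y) ∉ P1.edges ∧ s(x, y) ∉ P2.edges :=
  statement_0_general hC hC' hne hsub hcross

end Paper
end

section
/- Let B be a brace and C a cycle of length four in B (note that every 4-cycle in a brace is conformal). Then there is a conformal cross over C in B if and only if C is a subgraph of some conformal bisubdivision of K_{3,3} in B. -/
namespace Paper

open SimpleGraph

variable {V : Type*} {W : Type*}

/-!
In the bipartite graph the two crossing paths of a conformal cross over the 4-cycle `a₁ b₁ a₂ b₂`
have even length, so a perfect matching `N` of the cross leaves exactly one vertex of each path
unmatched along it; these two vertices are matched to each other by an edge of the 4-cycle, say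
`a₁ b₁`. The brace has a perfect matching `M` containing `a₁ b₁` and `a₂ b₂`. The cycle of `M` and
`N` through `a₂` starts with `a₂ b₂`, so on the way back to `a₂` it has to cross from the right path
to the left one. Between these two it is an alternating path, the ninth link of a bisubdivision of
`K₃,₃` whose other links are pieces of the 4-cycle and of the crossing paths.

Conversely, links have odd length and a 4-cycle does not fit into a path, so a 4-cycle in a
bisubdivision of `K₃,₃` consists of four links of length one. The links at the remaining two branch
vertices form the crossing paths, except for the link joining these two, whose interior can be
matched by itself.
-/

/-! ### Perfect matchings -/

section Matching

variable {G : SimpleGraph V} {S T A : Set V} {M N E : Set (Sym2 V)} {u v w : V}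

lemma IsPMOn.matchesExactly (h : IsPMOn G S N) (hAS : A ⊆ S)
    (hA : ∀ v ∈ A, ∃ e ∈ N, e ∈ E ∧ v ∈ e) : MatchesExactly N E A := by
  intro v hv
  obtain ⟨e, he, heE, hve⟩ := hA v hv
  exact ⟨e, ⟨he, heE, hve⟩, fun f hf ↦ (h.2.2 v (hAS hv)).unique ⟨hf.1, hf.2.2⟩ ⟨he, hve⟩⟩

lemma IsPMOn.union (hM : IsPMOn G S M) (hN : IsPMOn G T N) (hST : Disjoint S T) :
    IsPMOn G (S ∪ T) (M ∪ N) := by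
  refine ⟨fun e he ↦ he.elim (hM.1 e) (hN.1 e),
    fun e he v hv ↦ he.imp (hM.2.1 e · v hv) (hN.2.1 e · v hv), ?_⟩
  rintro v (hv | hv)
  · obtain ⟨e, ⟨he, hve⟩, hu⟩ := hM.2.2 v hv
    refine ⟨e, ⟨.inl he, hve⟩, ?_⟩
    rintro f ⟨hf | hf, hvf⟩
    · exact hu f ⟨hf, hvf⟩
    · exact (Set.disjoint_left.1 hST hv (hN.2.1 f hf v hvf)).elim
  · obtain ⟨e, ⟨he, hve⟩, hu⟩ := hN.2.2 v hv
    refine ⟨e, ⟨.inr he, hve⟩, ?_⟩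
    rintro f ⟨hf | hf, hvf⟩
    · exact (Set.disjoint_left.1 hST (hM.2.1 f hf v hvf) hv).elim
    · exact hu f ⟨hf, hvf⟩

lemma isPMOn_pair (h : G.Adj u v) : IsPMOn G {u, v} {s(u, v)} := by
  refine ⟨by simpa using h, by simp, fun w hw ↦ ⟨s(u, v), by simpa using hw, by simp⟩⟩

/-- The vertex matched to `v` by a perfect matching. -/
noncomputable def IsPM.partner (h : IsPM G N) (v : V) : V :=
  Sym2.Mem.other (h.2.2 v (Set.mem_univ v)).exists.choose_spec.2

lemma IsPM.mk_partner_mem (h : IsPM G N) (v : V) : s(v, h.partner v) ∈ N := by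
  rw [partner, Sym2.other_spec]
  exact (h.2.2 v (Set.mem_univ v)).exists.choose_spec.1

lemma IsPM.eq_partner (h : IsPM G N) (hvw : s(v, w) ∈ N) : w = h.partner v :=
  Sym2.congr_right.1 <| (h.2.2 v (Set.mem_univ v)).unique
    ⟨hvw, Sym2.mem_mk_left v w⟩ ⟨h.mk_partner_mem v, Sym2.mem_mk_left v _⟩

lemma IsPM.partner_involutive (h : IsPM G N) : Function.Involutive h.partner :=
  fun v ↦ (h.eq_partner (Sym2.eq_swap ▸ h.mk_partner_mem v)).symm

lemma IsPM.adj_partner (h : IsPM G N) (v : V) : G.Adj v (h.partner v) :=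
  h.1 _ (h.mk_partner_mem v)

lemma even_card_of_involutive {f : V → V} (hf : Function.Involutive f) (hne : ∀ v, f v ≠ v)
    (s : Finset V) (hs : ∀ v ∈ s, f v ∈ s) : Even s.card := by
  have h : ∑ _v ∈ s, (1 : ZMod 2) = 0 :=
    Finset.sum_involution (fun v _ ↦ f v) (fun _ _ ↦ by decide) (fun v _ _ ↦ hne v) hs
      (fun v _ ↦ hf v)
  rwa [Finset.sum_const, nsmul_one, ZMod.natCast_eq_zero_iff, ← even_iff_two_dvd] at h

lemma exists_coloring_of_isBipartite (h : IsBipartite G) : Nonempty (G.Coloring Bool) := by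
  classical
  obtain ⟨V₁, V₂, hd, hu, hadj⟩ := h
  have hcompl : V₂ = V₁ᶜ := (eq_compl_iff_isCompl.2 ⟨hd.symm, codisjoint_iff.2 <| by
    rw [sup_comm]; exact hu⟩)
  refine ⟨Coloring.mk (fun v ↦ decide (v ∈ V₁)) fun {x y} hxy heq ↦ ?_⟩
  have := hadj hxy
  rw [hcompl, Set.mem_compl_iff] at this
  grind

lemma IsBrace.exists_isPM (h : IsBrace G) {a b c d : V} (hab : G.Adj a b) (hcd : G.Adj c d)
    (hdisj : ∀ x ∈ s(a, b), x ∉ s(c, d)) : ∃ M, IsPM G M ∧ s(a, b) ∈ M ∧ s(c, d) ∈ M := by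
  obtain ⟨M, hM, hsub⟩ := h.2.2 {s(a, b), s(c, d)}
    (by rintro e (rfl | rfl) <;> assumption)
    (by
      rintro e (rfl | rfl) f (rfl | rfl) hne x hx hx'
      · exact hne rfl
      · exact hdisj x hx hx'
      · exact hdisj x hx' hx
      · exact hne rfl)
    (by simpa using Set.ncard_insert_le s(a, b) {s(c, d)})
  exact ⟨M, hM, hsub (by simp), hsub (by simp)⟩

end Matching

lemma MatchesExactly.isPMOn_compl {G : SimpleGraph V} {M E : Set (Sym2 V)} {A : Set V}
    (h : MatchesExactly M E A) (hM : IsPM G M) (hE : ∀ e ∈ E, ∀ v ∈ e, v ∈ A) :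
    IsPMOn G Aᶜ {e | e ∈ M ∧ ∀ v ∈ e, v ∉ A} := by
  refine ⟨fun e he ↦ hM.1 e he.1, fun e he v hv ↦ he.2 v hv, fun v hv ↦ ?_⟩
  obtain ⟨e, ⟨he, hve⟩, hu⟩ := hM.2.2 v (Set.mem_univ v)
  refine ⟨e, ⟨⟨he, fun w hw hwA ↦ ?_⟩, hve⟩, fun f hf ↦ hu f ⟨hf.1.1, hf.2⟩⟩
  obtain ⟨f, ⟨hf, hfE, hwf⟩, -⟩ := h w hwA
  obtain rfl := (hM.2.2 w (Set.mem_univ w)).unique ⟨hf, hwf⟩ ⟨he, hw⟩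
  exact hv (hE f hfE v hve)

/-! ### Paths -/

section Path

variable {G : SimpleGraph V} {u v x : V} {p : G.Walk u v}

lemma mk_getVert_mem_edges_iff (hp : p.IsPath) {i j : ℕ} (hi : i ≤ p.length)
    (hj : j ≤ p.length) :
    s(p.getVert i, p.getVert j) ∈ p.edges ↔ i + 1 = j ∨ j + 1 = i := by
  have inj {k l : ℕ} (hk : k ≤ p.length) (hl : l ≤ p.length) :
      p.getVert k = p.getVert l ↔ k = l := hp.getVert_injOn.eq_iff hk hl
  rw [Walk.mk_mem_edges_iff_exists]
  constructor
  · rintro ⟨k, hk, h⟩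
    rw [Sym2.eq_iff, inj (by lia) hi, inj (by lia) hj, inj (by lia) hj, inj (by lia) hi] at h
    lia
  · rintro (rfl | rfl)
    · exact ⟨i, by lia, rfl⟩
    · exact ⟨j, by lia, Sym2.eq_swap⟩

lemma exists_two_edges_of_mem_support (hp : p.IsPath) (hx : x ∈ p.support) (hxu : x ≠ u)
    (hxv : x ≠ v) : ∃ y z, y ≠ z ∧ s(x, y) ∈ p.edges ∧ s(x, z) ∈ p.edges := by
  obtain ⟨i, rfl, hi⟩ := Walk.mem_support_iff_exists_getVert.1 hx
  have h0 : i ≠ 0 := by rintro rfl; exact hxu p.getVert_zero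
  have hl : i ≠ p.length := by rintro rfl; exact hxv p.getVert_length
  refine ⟨p.getVert (i - 1), p.getVert (i + 1), fun h ↦ ?_,
    (mk_getVert_mem_edges_iff hp hi (by lia)).2 (by lia),
    (mk_getVert_mem_edges_iff hp hi (by lia)).2 (by lia)⟩
  have : i - 1 = i + 1 := hp.getVert_injOn (Set.mem_ofPred.2 (by lia)) (Set.mem_ofPred.2 (by lia)) h
  lia

lemma not_C4edges_subset_edges (hp : p.IsPath) {a b c d : V} (hnd : [a, b, c, d].Nodup) :
    ¬ C4edges a b c d ⊆ {e | e ∈ p.edges} := by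
  intro h
  simp only [C4edges, Set.insert_subset_iff, Set.singleton_subset_iff, Set.mem_ofPred_eq] at h
  obtain ⟨hab, hbc, hcd, hda⟩ := h
  obtain ⟨i, rfl, hi⟩ :=
    Walk.mem_support_iff_exists_getVert.1 (p.fst_mem_support_of_mem_edges hab)
  obtain ⟨j, rfl, hj⟩ :=
    Walk.mem_support_iff_exists_getVert.1 (p.fst_mem_support_of_mem_edges hbc)
  obtain ⟨k, rfl, hk⟩ :=
    Walk.mem_support_iff_exists_getVert.1 (p.fst_mem_support_of_mem_edges hcd)
  obtain ⟨l, rfl, hl⟩ :=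
    Walk.mem_support_iff_exists_getVert.1 (p.fst_mem_support_of_mem_edges hda)
  rw [mk_getVert_mem_edges_iff hp (by assumption) (by assumption)] at hab hbc hcd hda
  have hik : i ≠ k := by rintro rfl; simp at hnd
  have hjl : j ≠ l := by rintro rfl; simp at hnd
  lia

lemma mem_support_of_mem_edges {y : V} {e : Sym2 V} (he : e ∈ p.edges) (hy : y ∈ e) :
    y ∈ p.support := by
  obtain ⟨z, rfl⟩ := Sym2.mem_iff_exists.1 hy
  exact p.fst_mem_support_of_mem_edges he

lemma mem_ends_iff_of_even_length (hp : p.IsPath) (huv : u ≠ v)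
    (heven : Even p.length) {f : V → V} (hf : Function.Involutive f) (hne : ∀ w, f w ≠ w)
    (hint : ∀ w ∈ p.support, w ≠ u → w ≠ v → f w ∈ p.support) :
    f u ∈ p.support ↔ f v ∉ p.support := by
  classical
  have hcard : p.support.toFinset.card = p.length + 1 := by
    rw [List.toFinset_card_of_nodup hp.support_nodup, p.length_support]
  have hclosed := even_card_of_involutive hf hne {w ∈ p.support.toFinset | f w ∈ p.support}
    (by simp +contextual [hf _])
  by_cases hu : f u ∈ p.support <;> by_cases hv : f v ∈ p.support
  · have hall : ∀ w ∈ p.support, f w ∈ p.support := by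
      intro w hw
      by_cases hwu : w = u <;> by_cases hwv : w = v <;> simp_all
    rw [Finset.filter_true_of_mem (by simpa using hall), hcard] at hclosed
    grind
  · simp [hu, hv]
  · simp [hu, hv]
  · have : {w ∈ p.support.toFinset | f w ∈ p.support} = (p.support.toFinset.erase u).erase v := by
      grind [List.mem_toFinset]
    rw [this, Finset.card_erase_of_mem (by simp [huv.symm]), Finset.card_erase_of_mem (by simp)]
      at hclosed
    grind

lemma exists_isPMOn_of_length (hp : p.IsPath) :
    (Odd p.length → ∃ N, IsPMOn G {x | x ∈ p.support} N ∧ N ⊆ {e | e ∈ p.edges}) ∧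
      (Even p.length → ∃ N, IsPMOn G {x | x ∈ p.support ∧ x ≠ u} N ∧ N ⊆ {e | e ∈ p.edges}) := by
  induction p with
  | nil => exact ⟨by simp, fun _ ↦ ⟨∅, by simp [IsPMOn], Set.empty_subset _⟩⟩
  | @cons u w v h p ih =>
    rw [Walk.cons_isPath_iff] at hp
    obtain ⟨ihodd, iheven⟩ := ih hp.1
    simp only [Walk.length_cons, Nat.odd_add_one, Nat.even_add_one, Nat.not_odd_iff_even,
      Nat.not_even_iff_odd]
    refine ⟨fun hlen ↦ ?_, fun hlen ↦ ?_⟩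
    · obtain ⟨N, hN, hsub⟩ := iheven hlen
      refine ⟨{s(u, w)} ∪ N, ?_,
        Set.union_subset (by simp) (hsub.trans fun e ↦ List.mem_cons_of_mem _)⟩
      convert (isPMOn_pair h).union hN ?_ using 1
      · ext x
        have := p.start_mem_support
        grind [Walk.support_cons]
      · rw [Set.disjoint_left]
        grind
    · obtain ⟨N, hN, hsub⟩ := ihodd hlen
      refine ⟨N, ?_, hsub.trans fun e ↦ List.mem_cons_of_mem _⟩
      convert hN using 1
      ext x
      grind [Walk.support_cons]

lemma exists_isPMOn_interior (hp : p.IsPath) (hodd : Odd p.length) :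
    ∃ N, IsPMOn G {x | x ∈ p.support ∧ x ≠ u ∧ x ≠ v} N ∧ N ⊆ {e | e ∈ p.edges} := by
  cases p with
  | nil => simp at hodd
  | @cons u w v h p =>
    rw [Walk.cons_isPath_iff] at hp
    rw [Walk.length_cons, Nat.odd_add_one, Nat.not_odd_iff_even, ← p.length_reverse] at hodd
    obtain ⟨N, hN, hsub⟩ := (exists_isPMOn_of_length hp.1.reverse).2 hodd
    refine ⟨N, ?_, fun e he ↦ ?_⟩
    · convert hN using 1
      ext x
      grind [Walk.support_cons, Walk.support_reverse]
    · simpa using .inr (by simpa using hsub he)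

end Path

lemma isPath_append {G : SimpleGraph V} {u v w : V} {p : G.Walk u v} {q : G.Walk v w}
    (hp : p.IsPath) (hq : q.IsPath) (h : ∀ x ∈ p.support, x ∈ q.support → x = v) :
    (p.append q).IsPath := by
  have hq' := hq.support_nodup
  rw [← q.cons_tail_support, List.nodup_cons] at hq'
  rw [Walk.isPath_def, Walk.support_append, List.nodup_append']
  refine ⟨hp.support_nodup, hq'.2, fun x hx hx' ↦ hq'.1 ?_⟩
  rwa [h x hx (List.mem_of_mem_tail hx')] at hx'

/-! ### Crosses over a 4-cycle -/

/-- The 4-cycle `a₁ b₁ a₂ b₂` together with two disjoint paths joining its opposite vertices, `left`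
from `a₁` to `a₂` and `right` from `b₁` to `b₂`: the subgraph `C + P₁ + P₂` of a cross, without any
reference to a matching. -/
structure SquareCross (G : SimpleGraph V) (a₁ b₁ a₂ b₂ : V) where
  isC4 : IsC4In G a₁ b₁ a₂ b₂
  left : G.Walk a₁ a₂
  right : G.Walk b₁ b₂
  left_isPath : left.IsPath
  right_isPath : right.IsPath
  disjoint : left.support.Disjoint right.support

namespace SquareCross

section

variable {G : SimpleGraph V} {a₁ b₁ a₂ b₂ x y : V} {N : Set (Sym2 V)}

/-- The vertex set of a cross; the 4-cycle contributes only ends of the two paths. -/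
def verts (D : SquareCross G a₁ b₁ a₂ b₂) : Set V :=
  {v | v ∈ D.left.support} ∪ {v | v ∈ D.right.support}

/-- The edge set of a cross: the 4-cycle and the two paths. -/
def edgeSet (D : SquareCross G a₁ b₁ a₂ b₂) : Set (Sym2 V) :=
  C4edges a₁ b₁ a₂ b₂ ∪ {e | e ∈ D.left.edges} ∪ {e | e ∈ D.right.edges}

/-- The same cross with the roles of its two paths exchanged. -/
def swap (D : SquareCross G a₁ b₁ a₂ b₂) : SquareCross G b₁ a₁ b₂ a₂ where
  isC4 := by
    obtain ⟨hnd, h₁, h₂, h₃, h₄⟩ := D.isC4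
    exact ⟨by grind, h₁.symm, h₄.symm, h₃.symm, h₂.symm⟩
  left := D.right
  right := D.left
  left_isPath := D.right_isPath
  right_isPath := D.left_isPath
  disjoint := D.disjoint.symm

/-- The same cross with its left path traversed backwards. -/
def reverseLeft (D : SquareCross G a₁ b₁ a₂ b₂) : SquareCross G a₂ b₁ a₁ b₂ where
  isC4 := by
    obtain ⟨hnd, h₁, h₂, h₃, h₄⟩ := D.isC4
    exact ⟨by grind, h₂.symm, h₁.symm, h₄.symm, h₃.symm⟩
  left := D.left.reverse
  right := D.right
  left_isPath := D.left_isPath.reverse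
  right_isPath := D.right_isPath
  disjoint := by simpa using D.disjoint

variable (D : SquareCross G a₁ b₁ a₂ b₂)

lemma edgeSet_swap : D.swap.edgeSet = D.edgeSet := by
  ext e
  simp only [edgeSet, swap, C4edges, Set.mem_union, Set.mem_insert_iff, Set.mem_singleton_iff,
    Set.mem_ofPred_eq, Sym2.eq_swap (a := b₁), Sym2.eq_swap (a := b₂)]
  tauto

lemma verts_swap : D.swap.verts = D.verts := Set.union_comm _ _

lemma edgeSet_reverseLeft : D.reverseLeft.edgeSet = D.edgeSet := by
  ext e
  simp only [edgeSet, reverseLeft, C4edges, Set.mem_union, Set.mem_insert_iff,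
    Set.mem_singleton_iff, Set.mem_ofPred_eq, Sym2.eq_swap (a := b₁), Sym2.eq_swap (a := b₂),
    Walk.edges_reverse, List.mem_reverse]
  tauto

lemma verts_reverseLeft : D.reverseLeft.verts = D.verts := by
  simp [verts, reverseLeft]

lemma mem_verts_of_mem_edgeSet {e : Sym2 V} (he : e ∈ D.edgeSet) (hx : x ∈ e) : x ∈ D.verts := by
  rcases he with (he | he) | he
  · have := D.left.start_mem_support
    have := D.left.end_mem_support
    have := D.right.start_mem_support
    have := D.right.end_mem_support
    simp only [C4edges, Set.mem_insert_iff, Set.mem_singleton_iff] at he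
    rcases he with rfl | rfl | rfl | rfl <;> rcases Sym2.mem_iff.1 hx with rfl | rfl <;>
      simp_all [verts]
  · exact .inl (mem_support_of_mem_edges he hx)
  · exact .inr (mem_support_of_mem_edges he hx)

lemma mem_left_edges (hxy : s(x, y) ∈ D.edgeSet) (hx : x ∈ D.left.support)
    (hy : y ∈ D.left.support) : s(x, y) ∈ D.left.edges := by
  have hb₁ : b₁ ∉ D.left.support := fun h ↦ D.disjoint h D.right.start_mem_support
  have hb₂ : b₂ ∉ D.left.support := fun h ↦ D.disjoint h D.right.end_mem_support
  rcases hxy with (h | h) | h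
  · simp only [C4edges, Set.mem_insert_iff, Set.mem_singleton_iff, Sym2.eq_iff] at h
    grind
  · exact h
  · exact (D.disjoint hx (mem_support_of_mem_edges h (Sym2.mem_mk_left x y))).elim

lemma mem_left_support (hxy : s(x, y) ∈ D.edgeSet) (hx : x ∈ D.left.support) (hx₁ : x ≠ a₁)
    (hx₂ : x ≠ a₂) : y ∈ D.left.support := by
  have hb₁ : b₁ ∉ D.left.support := fun h ↦ D.disjoint h D.right.start_mem_support
  have hb₂ : b₂ ∉ D.left.support := fun h ↦ D.disjoint h D.right.end_mem_support
  rcases hxy with (h | h) | h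
  · simp only [C4edges, Set.mem_insert_iff, Set.mem_singleton_iff, Sym2.eq_iff] at h
    grind
  · exact mem_support_of_mem_edges h (Sym2.mem_mk_right x y)
  · exact (D.disjoint hx (mem_support_of_mem_edges h (Sym2.mem_mk_left x y))).elim

lemma even_length_left (col : G.Coloring Bool) : Even D.left.length := by
  obtain ⟨-, h₁, h₂, -, -⟩ := D.isC4
  have h₁' := col.valid h₁
  have h₂' := col.valid h₂
  rw [col.even_length_iff_congr]
  grind

/-- The edge set `N` matches `a₁` to `b₁` and every other vertex of the cross along the path
containing it. -/
structure IsRooted (N : Set (Sym2 V)) : Prop where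
  root_mem : s(a₁, b₁) ∈ N
  left : ∀ v ∈ D.left.support, v ≠ a₁ → ∃ e ∈ N, e ∈ D.left.edges ∧ v ∈ e
  right : ∀ v ∈ D.right.support, v ≠ b₁ → ∃ e ∈ N, e ∈ D.right.edges ∧ v ∈ e

variable {D}

lemma IsRooted.mono {M : Set (Sym2 V)} (h : D.IsRooted N) (hNM : N ⊆ M) : D.IsRooted M where
  root_mem := hNM h.root_mem
  left v hv hne := (h.left v hv hne).imp fun _ he ↦ ⟨hNM he.1, he.2⟩
  right v hv hne := (h.right v hv hne).imp fun _ he ↦ ⟨hNM he.1, he.2⟩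

lemma IsRooted.exists_mem_edgeSet (h : D.IsRooted N) (hx : x ∈ D.verts) :
    ∃ e ∈ N, e ∈ D.edgeSet ∧ x ∈ e := by
  have hroot : s(a₁, b₁) ∈ D.edgeSet := by simp [edgeSet, C4edges]
  rcases hx with hx | hx
  · by_cases hx₁ : x = a₁
    · exact ⟨_, h.root_mem, hroot, by simp [hx₁]⟩
    · exact (h.left x hx hx₁).imp fun e he ↦ ⟨he.1, .inl (.inr he.2.1), he.2.2⟩
  · by_cases hx₁ : x = b₁
    · exact ⟨_, h.root_mem, hroot, by simp [hx₁]⟩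
    · exact (h.right x hx hx₁).imp fun e he ↦ ⟨he.1, .inr he.2.1, he.2.2⟩

lemma IsRooted.partner_mem_left (h : D.IsRooted N) (hN : IsPM G N) (hx : x ∈ D.left.support)
    (hx₁ : x ≠ a₁) : hN.partner x ∈ D.left.support := by
  obtain ⟨e, he, heD, hxe⟩ := h.left x hx hx₁
  obtain ⟨y, rfl⟩ := Sym2.mem_iff_exists.1 hxe
  exact hN.eq_partner he ▸ mem_support_of_mem_edges heD (Sym2.mem_mk_right x y)

end

end SquareCross

lemma MatchesExactly.mk_partner_mem {G : SimpleGraph V} {N E : Set (Sym2 V)} {A : Set V} {x : V}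
    (h : MatchesExactly N E A) (hN : IsPM G N) (hx : x ∈ A) : s(x, hN.partner x) ∈ E := by
  obtain ⟨e, ⟨he, heE, hxe⟩, -⟩ := h x hx
  obtain ⟨y, rfl⟩ := Sym2.mem_iff_exists.1 hxe
  rwa [← hN.eq_partner he]

namespace SquareCross

section

variable {G : SimpleGraph V} {a₁ b₁ a₂ b₂ : V} {N : Set (Sym2 V)}
  {D : SquareCross G a₁ b₁ a₂ b₂}

lemma partner_mem_left_iff (col : G.Coloring Bool) (hN : IsPM G N)
    (hD : MatchesExactly N D.edgeSet D.verts) :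
    hN.partner a₁ ∈ D.left.support ↔ hN.partner a₂ ∉ D.left.support :=
  mem_ends_iff_of_even_length D.left_isPath (by rintro rfl; simpa using D.isC4.1)
    (D.even_length_left col) hN.partner_involutive (fun v ↦ (hN.adj_partner v).ne')
    fun _ hv ↦ D.mem_left_support (hD.mk_partner_mem hN (.inl hv)) hv

lemma exists_mem_left_edges (col : G.Coloring Bool) (hN : IsPM G N)
    (hD : MatchesExactly N D.edgeSet D.verts) (ha : hN.partner a₁ ∉ D.left.support) {v : V}
    (hv : v ∈ D.left.support) (hne : v ≠ a₁) : ∃ e ∈ N, e ∈ D.left.edges ∧ v ∈ e := by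
  have hD' := hD.mk_partner_mem hN (.inl hv)
  refine ⟨s(v, hN.partner v), hN.mk_partner_mem v, D.mem_left_edges hD' hv ?_, by simp⟩
  by_cases hv₂ : v = a₂
  · subst hv₂
    by_contra hmem
    exact ha ((partner_mem_left_iff col hN hD).2 hmem)
  · exact D.mem_left_support hD' hv hne hv₂

lemma isRooted_of_partner_notMem (col : G.Coloring Bool) (hN : IsPM G N)
    (hD : MatchesExactly N D.edgeSet D.verts) (ha : hN.partner a₁ ∉ D.left.support)
    (hb : hN.partner b₁ ∉ D.right.support) : D.IsRooted N := by
  have hleft := fun v hv hne ↦ exists_mem_left_edges col hN hD ha (v := v) hv hne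
  have hright := fun v hv hne ↦ exists_mem_left_edges (D := D.swap) col hN
    (by rwa [edgeSet_swap, verts_swap]) hb (v := v) hv hne
  refine ⟨?_, hleft, hright⟩
  have ha₁ : hN.partner a₁ ∈ D.right.support :=
    (D.mem_verts_of_mem_edgeSet (hD.mk_partner_mem hN (.inl D.left.start_mem_support))
      (Sym2.mem_mk_right _ _)).resolve_left ha
  suffices hN.partner a₁ = b₁ from this ▸ hN.mk_partner_mem a₁
  by_contra hne
  obtain ⟨e, he, heR, hve⟩ := hright _ ha₁ hne
  obtain ⟨y, rfl⟩ := Sym2.mem_iff_exists.1 hve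
  rw [hN.eq_partner he, hN.partner_involutive a₁] at heR
  exact D.disjoint D.left.start_mem_support (mem_support_of_mem_edges heR (Sym2.mem_mk_right _ _))

lemma exists_isRooted_of_partner_notMem_left (col : G.Coloring Bool) (hN : IsPM G N)
    (hD : MatchesExactly N D.edgeSet D.verts) (ha : hN.partner a₁ ∉ D.left.support) :
    ∃ (b₁' b₂' : V) (D' : SquareCross G a₁ b₁' a₂ b₂'), D'.edgeSet = D.edgeSet ∧ D'.IsRooted N := by
  by_cases hb : hN.partner b₁ ∈ D.right.support
  · have hD' : D.swap.reverseLeft.swap.edgeSet = D.edgeSet ∧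
        D.swap.reverseLeft.swap.verts = D.verts := by
      simp only [edgeSet_swap, verts_swap, edgeSet_reverseLeft, verts_reverseLeft, and_self]
    refine ⟨b₂, b₁, D.swap.reverseLeft.swap, hD'.1,
      isRooted_of_partner_notMem col hN (by rwa [hD'.1, hD'.2]) ha ?_⟩
    have := (partner_mem_left_iff (D := D.swap) col hN (by rwa [edgeSet_swap, verts_swap])).1 hb
    simpa [swap, reverseLeft] using this
  · exact ⟨b₁, b₂, D, rfl, isRooted_of_partner_notMem col hN hD ha hb⟩

lemma exists_isRooted (col : G.Coloring Bool) (hN : IsPM G N)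
    (hD : MatchesExactly N D.edgeSet D.verts) :
    ∃ (a₁' b₁' a₂' b₂' : V) (D' : SquareCross G a₁' b₁' a₂' b₂'),
      D'.edgeSet = D.edgeSet ∧ D'.IsRooted N := by
  by_cases ha : hN.partner a₁ ∈ D.left.support
  · obtain ⟨b₁', b₂', D', hD', hroot⟩ := exists_isRooted_of_partner_notMem_left
      (D := D.reverseLeft) col hN (by rwa [edgeSet_reverseLeft, verts_reverseLeft])
      (by simpa [reverseLeft] using (partner_mem_left_iff col hN hD).1 ha)
    exact ⟨_, _, _, _, D', hD'.trans D.edgeSet_reverseLeft, hroot⟩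
  · obtain ⟨b₁', b₂', D', h⟩ := exists_isRooted_of_partner_notMem_left col hN hD ha
    exact ⟨_, _, _, _, D', h⟩

end

end SquareCross

/-! ### The alternating path -/

lemma exists_last_exit {f : ℕ → V} {S T : Set V} (hST : Disjoint S T) {k : ℕ} (h₀ : f 0 ∈ T)
    (hk : f k ∈ S) :
    ∃ i d, f i ∈ T ∧ f (i + d + 1) ∈ S ∧ ∀ l, 0 < l → l ≤ d → f (i + l) ∉ S ∪ T := by
  classical
  have hex : ∃ j, f j ∈ S := ⟨k, hk⟩
  set j := Nat.find hex
  set i := Nat.findGreatest (f · ∈ T) j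
  have hj : f j ∈ S := Nat.find_spec hex
  have hi : f i ∈ T := Nat.findGreatest_spec (P := (f · ∈ T)) (Nat.zero_le j) h₀
  have hij : i < j := lt_of_le_of_ne (Nat.findGreatest_le j)
    fun h ↦ Set.disjoint_left.1 hST hj (h ▸ hi)
  refine ⟨i, j - i - 1, hi, by rwa [show i + (j - i - 1) + 1 = j by omega], ?_⟩
  rintro l hl hld (h | h)
  · exact Nat.find_min hex (show i + l < j by omega) h
  · exact Nat.findGreatest_is_greatest (show i < i + l by omega) (by omega) h

section Alternating

variable {G : SimpleGraph V} {M N : Set (Sym2 V)} {u v x w : V}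

lemma exists_walk_iterate_partner (hN : IsPM G N) (hM : IsPM G M) {H : Set V}
    (hH : ∀ v ∈ H, hN.partner v ∈ H) (a : V) (k : ℕ)
    (hk : ∀ l, 0 < l → l ≤ k → (hN.partner ∘ hM.partner)^[l] a ∉ H) :
    ∃ p : G.Walk a (hM.partner ((hN.partner ∘ hM.partner)^[k] a)),
      (∀ e ∈ p.edges, e ∈ N ∪ M) ∧
      ∀ v ∈ p.support, v ≠ a → v ≠ hM.partner ((hN.partner ∘ hM.partner)^[k] a) → v ∉ H := by
  induction k with
  | zero =>
    refine ⟨(hM.adj_partner a).toWalk, ?_, ?_⟩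
    · simpa using .inr (hM.mk_partner_mem a)
    · simp +contextual [Adj.toWalk]
  | succ k ih =>
    have hlast := hk (k + 1) k.succ_pos le_rfl
    obtain ⟨p, hp, hpH⟩ := ih fun l hl hlk ↦ hk l hl (hlk.trans k.le_succ)
    rw [Function.iterate_succ_apply', Function.comp_apply] at hlast ⊢
    generalize hM.partner ((hN.partner ∘ hM.partner)^[k] a) = b at p hp hpH hlast ⊢
    have hb : b ∉ H := fun hb ↦ hlast (hH b hb)
    refine ⟨(p.concat (hN.adj_partner b)).concat (hM.adj_partner (hN.partner b)), ?_, ?_⟩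
    · simp only [Walk.edges_concat, List.concat_eq_append, List.mem_append, List.mem_singleton]
      rintro e ((he | rfl) | rfl)
      · exact hp e he
      · exact .inl (hN.mk_partner_mem b)
      · exact .inr (hM.mk_partner_mem _)
    · simp only [Walk.support_concat, List.mem_append, List.mem_singleton]
      rintro v ((hv | rfl) | rfl) hva hve
      · by_cases hvb : v = b
        · exact hvb ▸ hb
        · exact hpH v hv hva hvb
      · exact hlast
      · exact (hve rfl).elim

lemma coloring_partner (col : G.Coloring Bool) (hM : IsPM G M) (v : V) :
    col (hM.partner v) = !col v :=
  Bool.eq_not_of_ne (col.valid (hM.adj_partner v)).symm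

lemma coloring_iterate_partner (col : G.Coloring Bool) (hN : IsPM G N) (hM : IsPM G M) (v : V)
    (k : ℕ) : col ((hN.partner ∘ hM.partner)^[k] v) = col v := by
  induction k with
  | zero => rfl
  | succ k ih =>
    rw [Function.iterate_succ_apply', Function.comp_apply, coloring_partner, coloring_partner,
      Bool.not_not, ih]

/- On a finite graph the map sending `v` to the `N`-partner of its `M`-partner is injective, hence
periodic: started at `a` it steps into `T` at once and must later come back to `a ∈ S`. -/
lemma exists_alternating_path [Finite V] (col : G.Coloring Bool) (hN : IsPM G N) (hM : IsPM G M)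
    {S T : Set V} (hST : Disjoint S T) (hS : ∀ v ∈ S, hN.partner v ∈ S)
    (hT : ∀ v ∈ T, hN.partner v ∈ T) {a : V} (ha : a ∈ S) (haT : hM.partner a ∈ T) :
    ∃ z ∈ T, ∃ x ∈ S, col z = col a ∧ col x ≠ col a ∧ ∃ p : G.Walk z x, p.IsPath ∧
      (∀ e ∈ p.edges, e ∈ N ∪ M) ∧ ∀ v ∈ p.support, v ≠ z → v ≠ x → v ∉ S ∪ T := by
  classical
  set g := hN.partner ∘ hM.partner with hg
  have hginj : g.Injective := hN.partner_involutive.injective.comp hM.partner_involutive.injective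
  obtain ⟨k, hk, hka⟩ := hginj.mem_periodicPts a
  obtain ⟨k, rfl⟩ := Nat.exists_eq_add_of_lt hk
  obtain ⟨i, d, hi, hd, hmid⟩ := exists_last_exit (f := fun i ↦ g^[i] (g a)) hST (k := k)
    (hT _ haT) (by
      rwa [← Function.iterate_succ_apply, ← zero_add k, hka.eq])
  set z := g^[i] (g a) with hz
  have hshift (l : ℕ) : g^[i + l] (g a) = g^[l] z := by
    rw [hz, ← Function.iterate_add_apply, add_comm]
  have hcol (l : ℕ) : col (g^[l] z) = col a := by
    rw [← hshift, ← Function.iterate_succ_apply, coloring_iterate_partner col hN hM]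
  obtain ⟨p, hp, hpST⟩ := exists_walk_iterate_partner hN hM (H := S ∪ T)
    (fun v hv ↦ hv.imp (hS v) (hT v)) z d fun l hl hld ↦ hshift l ▸ hmid l hl hld
  refine ⟨z, hi, _, ?_, hcol 0, ?_, p.bypass, p.bypass_isPath, ?_, ?_⟩
  · have := hS _ hd
    rwa [add_assoc, hshift, Function.iterate_succ_apply', hg, Function.comp_apply,
      hN.partner_involutive] at this
  · rw [coloring_partner, ← hg, hcol]
    exact Bool.not_ne_self _
  · exact fun e he ↦ hp e (p.edges_bypass_subset_edges he)
  · exact fun v hv ↦ hpST v (p.support_bypass_subset_support hv)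

lemma exists_alternating_edges (hN : IsPM G N) (hM : IsPM G M) {p : G.Walk u v} (hp : p.IsPath)
    (hsub : ∀ e ∈ p.edges, e ∈ N ∪ M) (hx : x ∈ p.support) (hxu : x ≠ u) (hxv : x ≠ v) :
    ∃ y z, y ≠ z ∧ s(x, y) ∈ N ∧ s(x, y) ∈ p.edges ∧ s(x, z) ∈ M := by
  obtain ⟨y, z, hyz, hy, hz⟩ := exists_two_edges_of_mem_support hp hx hxu hxv
  have hN' := fun h₁ h₂ ↦ hyz ((hN.eq_partner (v := x) h₁).trans (hN.eq_partner h₂).symm)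
  have hM' := fun h₁ h₂ ↦ hyz ((hM.eq_partner (v := x) h₁).trans (hM.eq_partner h₂).symm)
  rcases hsub _ hy with hy' | hy'
  · exact ⟨y, z, hyz, hy', hy, (hsub _ hz).resolve_left (hN' hy')⟩
  · exact ⟨z, y, hyz.symm, (hsub _ hz).resolve_right (hM' hy'), hz, hy'⟩

end Alternating

/-! ### Bisubdivisions of complete bipartite graphs -/

namespace Bisubdivision

section CompleteBipartite

variable {α β : Type*} {G : SimpleGraph V}

@[elab_as_elim]
lemma completeBipartiteGraph_adj_cases
    {P : ∀ ⦃x y : α ⊕ β⦄, (completeBipartiteGraph α β).Adj x y → Prop}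
    (inl_inr : ∀ i j, P (x := .inl i) (y := .inr j) (by simp))
    (inr_inl : ∀ i j, P (x := .inr j) (y := .inl i) (by simp)) ⦃x y : α ⊕ β⦄
    (h : (completeBipartiteGraph α β).Adj x y) : P h :=
  match x, y, h with
  | .inl i, .inr j, _ => inl_inr i j
  | .inr j, .inl i, _ => inr_inl i j
  | .inl _, .inl _, h => absurd h (by simp)
  | .inr _, .inr _, h => absurd h (by simp)

/-- The bisubdivision of a complete bipartite graph with branch vertices `u i`, `w j` and links
`l i j`. That distinct links meet only in branch vertices is witnessed by a function `label` which
recovers `(i, j)` from any inner vertex of `l i j`. -/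
def ofCompleteBipartite (u : α → V) (w : β → V) (huw : Function.Injective (Sum.elim u w))
    (l : ∀ i j, G.Walk (u i) (w j)) (hpath : ∀ i j, (l i j).IsPath)
    (hodd : ∀ i j, Odd (l i j).length) (label : V → Option (α × β)) (hu : ∀ i, label (u i) = none)
    (hw : ∀ j, label (w j) = none)
    (hl : ∀ i j, ∀ v ∈ (l i j).support, v = u i ∨ v = w j ∨ label v = some (i, j)) :
    Bisubdivision (completeBipartiteGraph α β) G where
  bv := Sum.elim u w
  bv_inj := huw
  link
    | .inl i, .inr j, _ => l i j
    | .inr j, .inl i, _ => (l i j).reverse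
    | .inl _, .inl _, h => absurd h (by simp)
    | .inr _, .inr _, h => absurd h (by simp)
  link_isPath _ _ h := by
    induction h using completeBipartiteGraph_adj_cases with
    | inl_inr i j => exact hpath i j
    | inr_inl i j => exact (hpath i j).reverse
  link_odd _ _ h := by
    induction h using completeBipartiteGraph_adj_cases with
    | inl_inr i j => exact hodd i j
    | inr_inl i j => simpa using hodd i j
  link_symm _ _ h := by
    induction h using completeBipartiteGraph_adj_cases with
    | inl_inr i j => rfl
    | inr_inl i j => simp
  link_branch _ _ h k := by
    have hnone : label (Sum.elim u w k) = none := by cases k <;> simp [hu, hw]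
    have key (i j) (hk : Sum.elim u w k ∈ (l i j).support) : k = .inl i ∨ k = .inr j :=
      (hl i j _ hk).imp (huw ·) fun h ↦ h.elim (huw ·) (by simp [hnone])
    induction h using completeBipartiteGraph_adj_cases with
    | inl_inr i j => exact key i j
    | inr_inl i j => exact fun hk ↦ (key i j (by simpa using hk)).symm
  link_meet _ _ _ _ h h' hne v := by
    have key (i j i' j') (hne : (i, j) ≠ (i', j')) (hv : v ∈ (l i j).support)
        (hv' : v ∈ (l i' j').support) : (v = u i ∨ v = w j) ∧ (v = u i' ∨ v = w j') := by
      have := hl i j v hv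
      have := hl i' j' v hv'
      grind
    have hrev {i j} : v ∈ (l i j).reverse.support → v ∈ (l i j).support := by simp
    induction h using completeBipartiteGraph_adj_cases with
    | inl_inr i j =>
      induction h' using completeBipartiteGraph_adj_cases with
      | inl_inr i' j' => exact key i j i' j' (by grind)
      | inr_inl i' j' => exact fun hv hv' ↦ (key i j i' j' (by grind) hv (hrev hv')).imp_right .symm
    | inr_inl i j =>
      induction h' using completeBipartiteGraph_adj_cases with
      | inl_inr i' j' => exact fun hv hv' ↦ (key i j i' j' (by grind) (hrev hv) hv').imp_left .symm
      | inr_inl i' j' => exact fun hv hv' ↦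
          (key i j i' j' (by grind) (hrev hv) (hrev hv')).imp .symm .symm

variable (L : Bisubdivision (completeBipartiteGraph α β) G)

/-- The link of a bisubdivision of a complete bipartite graph from `i` in the first class to `j` in
the second. -/
def bipLink (i : α) (j : β) : G.Walk (L.bv (.inl i)) (L.bv (.inr j)) :=
  L.link (x := .inl i) (y := .inr j) (by simp)

variable {L}

lemma mem_edgeSet_iff_bipLink {e : Sym2 V} : e ∈ L.edgeSet ↔ ∃ i j, e ∈ (L.bipLink i j).edges := by
  constructor
  · rintro ⟨_, _, h, he⟩
    induction h using completeBipartiteGraph_adj_cases with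
    | inl_inr i j => exact ⟨i, j, he⟩
    | inr_inl i j => exact ⟨i, j, by simpa [bipLink, L.link_symm (x := .inl i)] using he⟩
  · rintro ⟨i, j, he⟩
    exact ⟨_, _, _, he⟩

lemma mem_verts_iff_bipLink {v : V} : v ∈ L.verts ↔ ∃ i j, v ∈ (L.bipLink i j).support := by
  constructor
  · rintro ⟨_, _, h, he⟩
    induction h using completeBipartiteGraph_adj_cases with
    | inl_inr i j => exact ⟨i, j, he⟩
    | inr_inl i j => exact ⟨i, j, by simpa [bipLink, L.link_symm (x := .inl i)] using he⟩
  · rintro ⟨i, j, he⟩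
    exact ⟨_, _, _, he⟩

end CompleteBipartite

end Bisubdivision

/-! ### From a cross to a bisubdivision of `K33` -/

lemma eq_of_mem_takeUntil_of_mem_dropUntil [DecidableEq V] {G : SimpleGraph V} {u v x y : V}
    {p : G.Walk u v} (hp : p.IsPath) (hx : x ∈ p.support) (h : y ∈ (p.takeUntil x hx).support)
    (h' : y ∈ (p.dropUntil x hx).support) : y = x := by
  by_contra hne
  exact Walk.IsPath.ne_of_mem_support_of_append (p := p.takeUntil x hx) (q := p.dropUntil x hx)
    (by rwa [p.take_spec]) hne h h' rfl

lemma mem_support_toWalk_iff {G : SimpleGraph V} {u v x : V} (h : G.Adj u v) :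
    x ∈ h.toWalk.support ↔ x = u ∨ x = v := by
  simp [h.support_toWalk]

lemma mem_support_reverse_iff {G : SimpleGraph V} {u v x : V} (p : G.Walk u v) :
    x ∈ p.reverse.support ↔ x ∈ p.support := by
  rw [Walk.support_reverse, List.mem_reverse]

namespace SquareCross

/-- A path joining the two paths of a cross, from `z` on the right path to `x` on the left one, and
otherwise avoiding the cross. -/
structure Rung {G : SimpleGraph V} {a₁ b₁ a₂ b₂ : V} (D : SquareCross G a₁ b₁ a₂ b₂) (z x : V) where
  walk : G.Walk z x
  isPath : walk.IsPath
  start_mem : z ∈ D.right.support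
  end_mem : x ∈ D.left.support
  interior : ∀ v ∈ walk.support, v ≠ z → v ≠ x → v ∉ D.verts

namespace Rung

section

variable [DecidableEq V] {G : SimpleGraph V} {a₁ b₁ a₂ b₂ z x : V}
  {D : SquareCross G a₁ b₁ a₂ b₂} (R : D.Rung z x)

/-- The nine paths into which the branch vertices `a₁, a₂, z` and `b₁, b₂, x` divide a cross with a
rung. -/
def links : ∀ i j : Fin 3, G.Walk (![a₁, a₂, z] i) (![b₁, b₂, x] j)
  | 0, 0 => D.isC4.2.1.toWalk
  | 0, 1 => D.isC4.2.2.2.2.symm.toWalk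
  | 0, 2 => D.left.takeUntil x R.end_mem
  | 1, 0 => D.isC4.2.2.1.symm.toWalk
  | 1, 1 => D.isC4.2.2.2.1.toWalk
  | 1, 2 => (D.left.dropUntil x R.end_mem).reverse
  | 2, 0 => (D.right.takeUntil z R.start_mem).reverse
  | 2, 1 => D.right.dropUntil z R.start_mem
  | 2, 2 => R.walk

/-- The index of the one among the nine paths of a cross with a rung that has `v` as an inner
vertex, if `v` is not a branch vertex. -/
def label (v : V) : Option (Fin 3 × Fin 3) :=
  if v ∈ [a₁, a₂, z, b₁, b₂, x] then none
  else if v ∈ D.left.support then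
    some (if v ∈ (D.left.takeUntil x R.end_mem).support then 0 else 1, 2)
  else if v ∈ D.right.support then
    some (2, if v ∈ (D.right.takeUntil z R.start_mem).support then 0 else 1)
  else some (2, 2)

variable {R} in
lemma label_eq_none_iff {v : V} : R.label v = none ↔ v ∈ [a₁, a₂, z, b₁, b₂, x] := by
  grind [label]

lemma links_isPath (i j : Fin 3) : (R.links i j).IsPath := by
  fin_cases i <;> fin_cases j
  · exact Walk.IsPath.of_adj _
  · exact Walk.IsPath.of_adj _
  · exact D.left_isPath.takeUntil _
  · exact Walk.IsPath.of_adj _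
  · exact Walk.IsPath.of_adj _
  · exact (D.left_isPath.dropUntil _).reverse
  · exact (D.right_isPath.takeUntil _).reverse
  · exact D.right_isPath.dropUntil _
  · exact R.isPath

lemma label_of_mem_takeUntil_left {v : V} (hv : v ∈ (D.left.takeUntil x R.end_mem).support)
    (h₁ : v ≠ a₁) (hx : v ≠ x) : R.label v = some (0, 2) := by
  have h₂ : v ≠ a₂ := fun h ↦ hx <| eq_of_mem_takeUntil_of_mem_dropUntil D.left_isPath R.end_mem hv
    (by simp [h])
  have hleft := D.left.support_takeUntil_subset_support R.end_mem hv
  have hne {y : V} (hy : y ∈ D.right.support) : v ≠ y := fun h ↦ D.disjoint hleft (h ▸ hy)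
  simp [label, *, hne R.start_mem, hne D.right.start_mem_support, hne D.right.end_mem_support]

lemma label_of_mem_dropUntil_left {v : V} (hv : v ∈ (D.left.dropUntil x R.end_mem).support)
    (h₂ : v ≠ a₂) (hx : v ≠ x) : R.label v = some (1, 2) := by
  have htake : v ∉ (D.left.takeUntil x R.end_mem).support :=
    fun h ↦ hx (eq_of_mem_takeUntil_of_mem_dropUntil D.left_isPath R.end_mem h hv)
  have h₁ : v ≠ a₁ := fun h ↦ htake (by simp [h])
  have hleft := D.left.support_dropUntil_subset_support R.end_mem hv
  have hne {y : V} (hy : y ∈ D.right.support) : v ≠ y := fun h ↦ D.disjoint hleft (h ▸ hy)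
  simp [label, *, hne R.start_mem, hne D.right.start_mem_support, hne D.right.end_mem_support]

lemma label_of_mem_takeUntil_right {v : V} (hv : v ∈ (D.right.takeUntil z R.start_mem).support)
    (h₁ : v ≠ b₁) (hz : v ≠ z) : R.label v = some (2, 0) := by
  have h₂ : v ≠ b₂ := fun h ↦ hz <| eq_of_mem_takeUntil_of_mem_dropUntil D.right_isPath R.start_mem
    hv (by simp [h])
  have hright := D.right.support_takeUntil_subset_support R.start_mem hv
  have hne {y : V} (hy : y ∈ D.left.support) : v ≠ y := fun h ↦ D.disjoint hy (h ▸ hright)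
  have hleft : v ∉ D.left.support := fun h ↦ hne h rfl
  simp [label, *, hne R.end_mem, hne D.left.start_mem_support, hne D.left.end_mem_support]

lemma label_of_mem_dropUntil_right {v : V} (hv : v ∈ (D.right.dropUntil z R.start_mem).support)
    (h₂ : v ≠ b₂) (hz : v ≠ z) : R.label v = some (2, 1) := by
  have htake : v ∉ (D.right.takeUntil z R.start_mem).support :=
    fun h ↦ hz (eq_of_mem_takeUntil_of_mem_dropUntil D.right_isPath R.start_mem h hv)
  have h₁ : v ≠ b₁ := fun h ↦ htake (by simp [h])
  have hright := D.right.support_dropUntil_subset_support R.start_mem hv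
  have hne {y : V} (hy : y ∈ D.left.support) : v ≠ y := fun h ↦ D.disjoint hy (h ▸ hright)
  have hleft : v ∉ D.left.support := fun h ↦ hne h rfl
  simp [label, *, hne R.end_mem, hne D.left.start_mem_support, hne D.left.end_mem_support]

lemma label_of_mem_walk {v : V} (hv : v ∈ R.walk.support) (hz : v ≠ z) (hx : v ≠ x) :
    R.label v = some (2, 2) := by
  have hmem := R.interior v hv hz hx
  simp only [verts, Set.mem_union, Set.mem_ofPred_eq, not_or] at hmem
  have := D.left.start_mem_support
  have := D.left.end_mem_support
  have := D.right.start_mem_support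
  have := D.right.end_mem_support
  grind [label]

lemma label_of_mem_links (i j : Fin 3) {v : V} (hv : v ∈ (R.links i j).support) :
    v = ![a₁, a₂, z] i ∨ v = ![b₁, b₂, x] j ∨ R.label v = some (i, j) := by
  by_contra! ⟨hu, hw, hlabel⟩
  match i, j with
  | 0, 0 | 0, 1 | 1, 0 | 1, 1 => exact ((mem_support_toWalk_iff _).1 hv).elim hu hw
  | 0, 2 => exact hlabel (R.label_of_mem_takeUntil_left hv hu hw)
  | 1, 2 =>
    exact hlabel (R.label_of_mem_dropUntil_left ((mem_support_reverse_iff _).1 hv) hu hw)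
  | 2, 0 =>
    exact hlabel (R.label_of_mem_takeUntil_right ((mem_support_reverse_iff _).1 hv) hw hu)
  | 2, 1 => exact hlabel (R.label_of_mem_dropUntil_right hv hw hu)
  | 2, 2 => exact hlabel (R.label_of_mem_walk hv hu hw)

end

section

variable {G : SimpleGraph V} {a₁ b₁ a₂ b₂ z x : V} {D : SquareCross G a₁ b₁ a₂ b₂}
  (R : D.Rung z x) {col : G.Coloring Bool}

lemma coloring_eq (h : IsC4In G a₁ b₁ a₂ b₂) (hz : col z = col a₁) (i : Fin 3) :
    col (![a₁, a₂, z] i) = col a₁ := by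
  have h₁ := col.valid h.2.1
  have h₂ := col.valid h.2.2.1
  fin_cases i
  · rfl
  · exact (Bool.eq_not_of_ne h₂.symm).trans (Bool.eq_not_of_ne h₁).symm
  · exact hz

lemma coloring_ne (h : IsC4In G a₁ b₁ a₂ b₂) (hx : col x ≠ col a₁) (j : Fin 3) :
    col (![b₁, b₂, x] j) ≠ col a₁ := by
  fin_cases j
  · exact (col.valid h.2.1).symm
  · exact col.valid h.2.2.2.2
  · exact hx

lemma injective_ends (R : D.Rung z x) : Function.Injective ![a₁, a₂, z] := by
  have h : a₁ ≠ a₂ := by rintro rfl; simpa using D.isC4.1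
  have h₁ : a₁ ≠ z := fun h ↦ D.disjoint D.left.start_mem_support (h ▸ R.start_mem)
  have h₂ : a₂ ≠ z := fun h ↦ D.disjoint D.left.end_mem_support (h ▸ R.start_mem)
  simp [Function.Injective, Fin.forall_fin_succ, h, h₁, h₂, h.symm, h₁.symm, h₂.symm]

/-- A cross with a rung, seen as a rung of the swapped cross. -/
def swap : D.swap.Rung x z where
  walk := R.walk.reverse
  isPath := R.isPath.reverse
  start_mem := R.end_mem
  end_mem := R.start_mem
  interior v hv hx hz := by
    rw [verts_swap]
    exact R.interior v (by simpa using hv) hz hx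

/-- The bisubdivision of `K33` formed by a cross and a rung whose ends have the right parity, as
expressed by the colouring `col`. -/
def toBisubdivision [DecidableEq V] (hz : col z = col a₁) (hx : col x ≠ col a₁) :
    Bisubdivision K33 G :=
  .ofCompleteBipartite ![a₁, a₂, z] ![b₁, b₂, x]
    (R.injective_ends.sumElim R.swap.injective_ends fun i j h ↦
      coloring_ne D.isC4 hx j (by rw [← h, coloring_eq D.isC4 hz]))
    R.links R.links_isPath
    (fun i j ↦ by
      rw [col.odd_length_iff_not_congr, coloring_eq D.isC4 hz]
      have := coloring_ne D.isC4 hx j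
      grind)
    R.label (fun i ↦ label_eq_none_iff.2 (by fin_cases i <;> simp))
    (fun j ↦ label_eq_none_iff.2 (by fin_cases j <;> simp)) fun i j _ ↦ R.label_of_mem_links i j

variable [DecidableEq V] (hz : col z = col a₁) (hx : col x ≠ col a₁)

lemma links_edges_subset (i j : Fin 3) {e : Sym2 V} (he : e ∈ (R.links i j).edges) :
    e ∈ (R.toBisubdivision hz hx).edgeSet :=
  Bisubdivision.mem_edgeSet_iff_bipLink.2 ⟨i, j, he⟩

lemma edgeSet_subset_toBisubdivision :
    D.edgeSet ∪ {e | e ∈ R.walk.edges} ⊆ (R.toBisubdivision hz hx).edgeSet := by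
  have hsub (i j) {e} := R.links_edges_subset hz hx i j (e := e)
  have hC {u v : V} (h : G.Adj u v) : s(u, v) ∈ h.toWalk.edges := by simp [h.edges_toWalk]
  have hrev {u v : V} {p : G.Walk u v} {e} (he : e ∈ p.edges) : e ∈ p.reverse.edges := by
    simpa using he
  rintro e (((h | h) | h) | h)
  · simp only [C4edges, Set.mem_insert_iff, Set.mem_singleton_iff] at h
    rcases h with rfl | rfl | rfl | rfl
    · exact hsub 0 0 (hC _)
    · exact Sym2.eq_swap ▸ hsub 1 0 (hC _)
    · exact hsub 1 1 (hC _)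
    · exact Sym2.eq_swap ▸ hsub 0 1 (hC _)
  · rw [Set.mem_ofPred_eq, ← D.left.take_spec R.end_mem, Walk.edges_append, List.mem_append] at h
    exact h.elim (hsub 0 2) fun h ↦ hsub 1 2 (hrev h)
  · rw [Set.mem_ofPred_eq, ← D.right.take_spec R.start_mem, Walk.edges_append,
      List.mem_append] at h
    exact h.elim (fun h ↦ hsub 2 0 (hrev h)) (hsub 2 1)
  · exact hsub 2 2 h

lemma verts_toBisubdivision_subset :
    (R.toBisubdivision hz hx).verts ⊆ D.verts ∪ {v | v ∈ R.walk.support} := by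
  have := D.left.start_mem_support
  have := D.left.end_mem_support
  have := D.right.start_mem_support
  have := D.right.end_mem_support
  intro v hv
  obtain ⟨i, j, hv⟩ := Bisubdivision.mem_verts_iff_bipLink.1 hv
  match i, j with
  | 0, 0 | 0, 1 | 1, 0 | 1, 1 =>
    obtain rfl | rfl := (mem_support_toWalk_iff _).1 hv <;> simp_all [verts]
  | 0, 2 => exact .inl (.inl (D.left.support_takeUntil_subset_support _ hv))
  | 1, 2 =>
    exact .inl (.inl (D.left.support_dropUntil_subset_support _ ((mem_support_reverse_iff _).1 hv)))
  | 2, 0 =>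
    exact .inl (.inr (D.right.support_takeUntil_subset_support _
      ((mem_support_reverse_iff _).1 hv)))
  | 2, 1 => exact .inl (.inr (D.right.support_dropUntil_subset_support _ hv))
  | 2, 2 => exact .inr hv

end

end Rung

end SquareCross

namespace SquareCross

section

variable {G : SimpleGraph V} {a₁ b₁ a₂ b₂ x : V} {N M : Set (Sym2 V)}
  {D : SquareCross G a₁ b₁ a₂ b₂}

lemma IsRooted.swap (h : D.IsRooted N) : D.swap.IsRooted N where
  root_mem := Sym2.eq_swap ▸ h.root_mem
  left := h.right
  right := h.left

lemma IsRooted.partner_mem_left_ne (h : D.IsRooted N) (hN : IsPM G N) (hx : x ∈ D.left.support)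
    (hx₁ : x ≠ a₁) : hN.partner x ∈ D.left.support ∧ hN.partner x ≠ a₁ := by
  refine ⟨h.partner_mem_left hN hx hx₁, ?_⟩
  rintro ha₁
  have : x = b₁ := by
    rw [← hN.partner_involutive x, ha₁, hN.eq_partner h.root_mem]
  exact D.disjoint hx (this ▸ D.right.start_mem_support)

lemma IsRooted.exists_rung [Finite V] (col : G.Coloring Bool) (h : D.IsRooted N) (hN : IsPM G N)
    (hM : IsPM G M) (h₁ : s(a₁, b₁) ∈ M) (h₂ : s(a₂, b₂) ∈ M) :
    ∃ (z x : V) (R : D.Rung z x), col z = col a₁ ∧ col x ≠ col a₁ ∧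
      ∀ e ∈ R.walk.edges, e ∈ N ∪ M := by
  obtain ⟨hnd, hab₁, hab₂, -, -⟩ := D.isC4
  have ha : col a₂ = col a₁ :=
    (Bool.eq_not_of_ne (col.valid hab₂).symm).trans (Bool.eq_not_of_ne (col.valid hab₁)).symm
  obtain ⟨z, hz, x, hx, hcz, hcx, p, hp, hsub, havoid⟩ :=
    exists_alternating_path col hN hM (S := {v | v ∈ D.left.support ∧ v ≠ a₁})
      (T := {v | v ∈ D.right.support ∧ v ≠ b₁}) (a := a₂)
      (Set.disjoint_left.2 fun v hv hv' ↦ D.disjoint hv.1 hv'.1)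
      (fun v hv ↦ h.partner_mem_left_ne hN hv.1 hv.2)
      (fun v hv ↦ h.swap.partner_mem_left_ne hN hv.1 hv.2)
      ⟨D.left.end_mem_support, by grind⟩
      (hM.eq_partner h₂ ▸ ⟨D.right.end_mem_support, by grind⟩)
  -- `a₁` and `b₁` are matched to each other by both `N` and `M`.
  have hroot (v : V) (hv : v ∈ p.support) (hvz : v ≠ z) (hvx : v ≠ x) : v ≠ a₁ ∧ v ≠ b₁ := by
    obtain ⟨y, w, hyw, hy, -, hw⟩ := exists_alternating_edges hN hM hp hsub hv hvz hvx
    have hNM (u : V) (hN' : s(v, u) ∈ N) (hM' : s(v, u) ∈ M) : False :=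
      hyw <| ((hN.eq_partner hy).trans (hN.eq_partner hN').symm).trans
        ((hM.eq_partner hM').trans (hM.eq_partner hw).symm)
    constructor <;> rintro rfl
    · exact hNM b₁ h.root_mem h₁
    · exact hNM a₁ (Sym2.eq_swap ▸ h.root_mem) (Sym2.eq_swap ▸ h₁)
  refine ⟨z, x, ⟨p, hp, hz.1, hx.1, fun v hv hvz hvx hvD ↦ havoid v hv hvz hvx ?_⟩,
    hcz.trans ha, ha ▸ hcx, hsub⟩
  have hv' := hroot v hv hvz hvx
  exact hvD.imp (⟨·, hv'.1⟩) (⟨·, hv'.2⟩)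

lemma IsRooted.exists_bisubdivision [Finite V] (col : G.Coloring Bool) (hG : IsBrace G)
    (h : D.IsRooted N) (hN : IsPM G N) :
    ∃ L : Bisubdivision K33 G, L.MConformal N ∧ D.edgeSet ⊆ L.edgeSet := by
  classical
  obtain ⟨hnd, hab₁, -, hab₂, -⟩ := D.isC4
  obtain ⟨M, hM, h₁, h₂⟩ := hG.exists_isPM hab₁ hab₂ (by simp_all)
  obtain ⟨z, x, R, hz, hx, hsub⟩ := h.exists_rung col hN hM h₁ h₂
  have hE := R.edgeSet_subset_toBisubdivision hz hx
  refine ⟨R.toBisubdivision hz hx, hN.matchesExactly (Set.subset_univ _) fun v hv ↦ ?_,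
    Set.subset_union_left.trans hE⟩
  by_cases hvD : v ∈ D.verts
  · exact (h.exists_mem_edgeSet hvD).imp fun e he ↦ ⟨he.1, hE (.inl he.2.1), he.2.2⟩
  · have hv' := (R.verts_toBisubdivision_subset hz hx hv).resolve_left hvD
    obtain ⟨y, -, -, hy, hyR, -⟩ := exists_alternating_edges hN hM R.isPath hsub hv'
      (by rintro rfl; exact hvD (.inr R.start_mem)) (by rintro rfl; exact hvD (.inl R.end_mem))
    exact ⟨_, hy, hE (.inr hyR), Sym2.mem_mk_left v y⟩

end

end SquareCross

section Cycle

variable {G : SimpleGraph V} {c : V} {C : G.Walk c c} {s₁ s₂ t₁ t₂ : V}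

lemma exists_eq_of_isCycle_of_length_eq_four (hC : C.IsCycle) (hlen : C.length = 4) :
    ∃ c₁ c₂ c₃, IsC4In G c c₁ c₂ c₃ ∧ C.support = [c, c₁, c₂, c₃, c] ∧
      {e | e ∈ C.edges} = C4edges c c₁ c₂ c₃ := by
  match C, hC, hlen with
  | .cons (v := c₁) h₀ (.cons (v := c₂) h₁ (.cons (v := c₃) h₂ (.cons h₃ .nil))), hC, _ =>
    refine ⟨c₁, c₂, c₃, ⟨?_, h₀, h₁, h₂, h₃⟩, by simp, by ext; simp [C4edges]⟩
    have := hC.support_nodup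
    simp only [Walk.support_cons, Walk.support_nil, List.tail_cons] at this
    grind

lemma InCyclicOrder.edges_eq (hC : C.IsCycle) (hlen : C.length = 4)
    (h : InCyclicOrder G C s₁ s₂ t₁ t₂) : {e | e ∈ C.edges} = C4edges s₁ s₂ t₁ t₂ := by
  obtain ⟨c₁, c₂, c₃, -, hsupp, hedges⟩ := exists_eq_of_isCycle_of_length_eq_four hC hlen
  have hrot : ∃ r < 4, [s₁, s₂, t₁, t₂] = [c₁, c₂, c₃, c].rotate r ∨
      [s₁, s₂, t₁, t₂] = [c, c₃, c₂, c₁].rotate r := by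
    obtain ⟨n, h⟩ := h
    rw [hsupp] at h
    refine ⟨n % 4, Nat.mod_lt _ (by simp), h.imp (fun h ↦ ?_) fun h ↦ ?_⟩ <;>
      exact (h.eq_of_length (by simp)).trans (List.rotate_mod _ n).symm
  rw [hedges]
  ext e
  obtain ⟨r, hr, h | h⟩ := hrot <;> interval_cases r <;>
    simp only [List.rotate_cons_succ, List.rotate_zero, List.cons_append, List.nil_append] at h <;>
    grind [C4edges, Sym2.eq_swap]

lemma HasConformalCross.exists_squareCross (hC : C.IsCycle) (hlen : C.length = 4)
    (h : HasConformalCross G C) :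
    ∃ (a₁ b₁ a₂ b₂ : V) (D : SquareCross G a₁ b₁ a₂ b₂) (N : Set (Sym2 V)), IsPM G N ∧
      MatchesExactly N D.edgeSet D.verts ∧ {e | e ∈ C.edges} ⊆ D.edgeSet := by
  obtain ⟨M, s₁, t₁, s₂, t₂, P₁, P₂, ⟨-, hnd, hcyc, hP₁, hP₂, -, -, hdisj, -, -⟩, N, hN, hND⟩ := h
  have hedges := hcyc.edges_eq hC hlen
  have hadj {u v : V} (h : s(u, v) ∈ C4edges s₁ s₂ t₁ t₂) : G.Adj u v :=
    C.adj_of_mem_edges (hedges.symm.subset h)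
  let D : SquareCross G s₁ s₂ t₁ t₂ :=
    { isC4 := ⟨hnd, hadj (by simp [C4edges]), hadj (by simp [C4edges]), hadj (by simp [C4edges]),
        hadj (by simp [C4edges])⟩
      left := P₁
      right := P₂
      left_isPath := hP₁
      right_isPath := hP₂
      disjoint := hdisj }
  have hD : D.edgeSet = {f | f ∈ C.edges} ∪ {f | f ∈ P₁.edges} ∪ {f | f ∈ P₂.edges} := by
    rw [hedges]
    rfl
  refine ⟨s₁, s₂, t₁, t₂, D, N, hN, fun v hv ↦ hD ▸ hND v ?_, fun e he ↦ .inl (.inl ?_)⟩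
  · exact hv.imp_left .inr
  · exact hedges.subset he

end Cycle

/-! ### 4-cycles in bisubdivisions -/

namespace Bisubdivision

section Links

variable {H : SimpleGraph W} {G : SimpleGraph V} {L : Bisubdivision H G} {x y x' y' : W} {u v : V}

lemma mem_link_edges_congr (h : H.Adj x y) (h' : H.Adj x' y') (he : s(x, y) = s(x', y'))
    {e : Sym2 V} : e ∈ (L.link h).edges ↔ e ∈ (L.link h').edges := by
  obtain ⟨rfl, rfl⟩ | ⟨rfl, rfl⟩ := Sym2.eq_iff.1 he
  · rfl
  · simp [L.link_symm h]

lemma mem_link_edges_of_inner_mem (h : H.Adj x y) (hu : u ∈ (L.link h).support) (hux : u ≠ L.bv x)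
    (huy : u ≠ L.bv y) (he : s(u, v) ∈ L.edgeSet) : s(u, v) ∈ (L.link h).edges := by
  obtain ⟨x', y', h', he⟩ := he
  by_cases hxy : s(x, y) = s(x', y')
  · exact (mem_link_edges_congr h h' hxy).2 he
  · have := (L.link_meet h h' hxy u hu (Walk.fst_mem_support_of_mem_edges _ he)).1
    tauto

lemma mem_link_edges_of_ends_mem (h : H.Adj x y) (hu : u ∈ (L.link h).support)
    (hv : v ∈ (L.link h).support) (he : s(u, v) ∈ L.edgeSet) : s(u, v) ∈ (L.link h).edges := by
  obtain ⟨x', y', h', he⟩ := he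
  by_cases hxy : s(x, y) = s(x', y')
  · exact (mem_link_edges_congr h h' hxy).2 he
  · have huv := ((L.link h').adj_of_mem_edges he).ne
    have hu' := L.link_meet h h' hxy u hu (Walk.fst_mem_support_of_mem_edges _ he)
    have hv' := L.link_meet h h' hxy v hv (Walk.snd_mem_support_of_mem_edges _ he)
    have := L.bv_inj
    grind [Function.Injective, Sym2.eq_swap]

lemma exists_mem_link_edges_of_mk_bv_mem (he : s(L.bv x, L.bv y) ∈ L.edgeSet) :
    ∃ h : H.Adj x y, s(L.bv x, L.bv y) ∈ (L.link h).edges := by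
  obtain ⟨x', y', h', he⟩ := he
  have hx := L.link_branch h' x (Walk.fst_mem_support_of_mem_edges _ he)
  have hy := L.link_branch h' y (Walk.snd_mem_support_of_mem_edges _ he)
  have hne : x ≠ y := fun h ↦ ((L.link h').adj_of_mem_edges he).ne (congrArg L.bv h)
  have hxy : s(x, y) = s(x', y') := by grind [Sym2.eq_swap]
  have h : H.Adj x y := by rwa [← mem_edgeSet, hxy]
  exact ⟨h, (mem_link_edges_congr h h' hxy).2 he⟩

end Links

section FourCycle

variable {H : SimpleGraph W} {G : SimpleGraph V} {L : Bisubdivision H G} {a b c d : V}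

/- If `a` is an inner vertex of a link then `b` and `d` lie on that link; they are not both its
ends, as a link has odd length, so `c` lies on it as well, but a path contains no 4-cycle. -/
lemma exists_bv_eq_of_C4edges_subset (col : G.Coloring Bool) (hnd : [a, b, c, d].Nodup)
    (hsub : C4edges a b c d ⊆ L.edgeSet) : ∃ x, L.bv x = a := by
  simp only [C4edges, Set.insert_subset_iff, Set.singleton_subset_iff] at hsub
  obtain ⟨hab, hbc, hcd, hda⟩ := hsub
  obtain ⟨x, y, h, hab'⟩ := id hab
  set p := L.link h
  have ha := p.fst_mem_support_of_mem_edges hab'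
  have hb := p.snd_mem_support_of_mem_edges hab'
  by_contra! hbr
  have had' : s(a, d) ∈ p.edges :=
    mem_link_edges_of_inner_mem h ha (hbr x).symm (hbr y).symm (Sym2.eq_swap ▸ hda)
  have hd := p.snd_mem_support_of_mem_edges had'
  have hends : (b ≠ L.bv x ∧ b ≠ L.bv y) ∨ (d ≠ L.bv x ∧ d ≠ L.bv y) := by
    have hodd := col.odd_length_iff_not_congr p |>.1 (L.link_odd h)
    have hcab := col.valid (p.adj_of_mem_edges hab')
    have hcad := col.valid (p.adj_of_mem_edges had')
    grind
  have hc : c ∈ p.support := by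
    obtain hb' | hd' := hends
    · exact p.snd_mem_support_of_mem_edges (mem_link_edges_of_inner_mem h hb hb'.1 hb'.2 hbc)
    · exact p.snd_mem_support_of_mem_edges
        (mem_link_edges_of_inner_mem h hd hd'.1 hd'.2 (Sym2.eq_swap ▸ hcd))
  refine not_C4edges_subset_edges (L.link_isPath h) hnd ?_
  simp only [C4edges, Set.insert_subset_iff, Set.singleton_subset_iff]
  exact ⟨hab', mem_link_edges_of_ends_mem h hb hc hbc, mem_link_edges_of_ends_mem h hc hd hcd,
    mem_link_edges_of_ends_mem h hd ha hda⟩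

lemma exists_isC4In_of_C4edges_subset (col : G.Coloring Bool) (hnd : [a, b, c, d].Nodup)
    (hsub : C4edges a b c d ⊆ L.edgeSet) :
    ∃ x y z w, IsC4In H x y z w ∧ L.bv x = a ∧ L.bv y = b ∧ L.bv z = c ∧ L.bv w = d := by
  have hrot {a b c d : V} (h : [a, b, c, d].Nodup ∧ C4edges a b c d ⊆ L.edgeSet) :
      [b, c, d, a].Nodup ∧ C4edges b c d a ⊆ L.edgeSet := by
    refine ⟨List.nodup_rotate (n := 1).2 h.1, fun e he ↦ h.2 ?_⟩
    simp only [C4edges, Set.mem_insert_iff, Set.mem_singleton_iff] at he ⊢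
    tauto
  have hbv {a b c d : V} (h : [a, b, c, d].Nodup ∧ C4edges a b c d ⊆ L.edgeSet) :=
    exists_bv_eq_of_C4edges_subset col h.1 h.2
  have h := And.intro hnd hsub
  obtain ⟨x, rfl⟩ := hbv h
  obtain ⟨y, rfl⟩ := hbv (hrot h)
  obtain ⟨z, rfl⟩ := hbv (hrot (hrot h))
  obtain ⟨w, rfl⟩ := hbv (hrot (hrot (hrot h)))
  have hadj {p q : W} (he : s(L.bv p, L.bv q) ∈ C4edges (L.bv x) (L.bv y) (L.bv z) (L.bv w)) :
      H.Adj p q := (exists_mem_link_edges_of_mk_bv_mem (hsub he)).1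
  exact ⟨x, y, z, w, ⟨(List.nodup_map_iff L.bv_inj (l := [x, y, z, w])).1 hnd,
    hadj (by simp [C4edges]), hadj (by simp [C4edges]), hadj (by simp [C4edges]),
    hadj (by simp [C4edges])⟩, rfl, rfl, rfl, rfl⟩

end FourCycle

end Bisubdivision

namespace Bisubdivision

/-- The same bisubdivision with its branch vertices renamed along an isomorphism. -/
def relabel {W' : Type*} {H : SimpleGraph W} {H' : SimpleGraph W'} {G : SimpleGraph V}
    (L : Bisubdivision H G) (σ : H' ≃g H) : Bisubdivision H' G where
  bv := L.bv ∘ σ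
  bv_inj := L.bv_inj.comp σ.injective
  link _ _ h := L.link (σ.map_rel_iff.2 h)
  link_isPath _ _ _ := L.link_isPath _
  link_odd _ _ _ := L.link_odd _
  link_symm _ _ _ := L.link_symm _
  link_branch _ _ _ _ hz := (L.link_branch _ _ hz).imp (σ.injective ·) (σ.injective ·)
  link_meet _ _ _ _ _ _ hne := L.link_meet _ _ fun h ↦ hne (Sym2.map.injective σ.injective h)

section Relabel

variable {W' : Type*} {H : SimpleGraph W} {H' : SimpleGraph W'} {G : SimpleGraph V}
  (L : Bisubdivision H G) (σ : H' ≃g H)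

lemma verts_relabel : (L.relabel σ).verts = L.verts := by
  ext v
  constructor
  · rintro ⟨x, y, h, hv⟩
    exact ⟨_, _, _, hv⟩
  · rintro ⟨x, y, h, hv⟩
    obtain ⟨x, rfl⟩ := σ.surjective x
    obtain ⟨y, rfl⟩ := σ.surjective y
    exact ⟨x, y, σ.map_rel_iff.1 h, hv⟩

lemma edgeSet_relabel : (L.relabel σ).edgeSet = L.edgeSet := by
  ext e
  constructor
  · rintro ⟨x, y, h, he⟩
    exact ⟨_, _, _, he⟩
  · rintro ⟨x, y, h, he⟩
    obtain ⟨x, rfl⟩ := σ.surjective x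
    obtain ⟨y, rfl⟩ := σ.surjective y
    exact ⟨x, y, σ.map_rel_iff.1 h, he⟩

end Relabel

end Bisubdivision

lemma exists_iso_K33_of_isC4In {x y z w : Fin 3 ⊕ Fin 3} (h : IsC4In K33 x y z w) :
    ∃ σ : K33 ≃g K33, σ (.inl 0) = x ∧ σ (.inr 0) = y ∧ σ (.inl 1) = z ∧ σ (.inr 1) = w := by
  have hperm : ∀ i j : Fin 3, i ≠ j → ∃ σ : Equiv.Perm (Fin 3), σ 0 = i ∧ σ 1 = j := by decide
  have hinl {i j k l : Fin 3} (h : IsC4In K33 (.inl i) (.inr j) (.inl k) (.inr l)) :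
      ∃ σ : K33 ≃g K33, σ (.inl 0) = .inl i ∧ σ (.inr 0) = .inr j ∧ σ (.inl 1) = .inl k ∧
        σ (.inr 1) = .inr l := by
    obtain ⟨σ, rfl, rfl⟩ := hperm i k (by rintro rfl; simpa using h.1)
    obtain ⟨τ, rfl, rfl⟩ := hperm j l (by rintro rfl; simpa using h.1)
    exact ⟨completeBipartiteGraphCongr σ τ, rfl, rfl, rfl, rfl⟩
  let swap : K33 ≃g K33 := ⟨Equiv.sumComm _ _, by rintro (i | i) (j | j) <;> simp⟩
  match x, y, z, w, h with
  | .inl i, .inr j, .inl k, .inr l, h => exact hinl h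
  | .inr i, .inl j, .inr k, .inl l, h =>
    obtain ⟨σ, h₁, h₂, h₃, h₄⟩ :=
      hinl (i := i) (j := j) (k := k) (l := l) (by simpa [IsC4In] using h)
    exact ⟨σ.trans swap, congrArg swap h₁, congrArg swap h₂, congrArg swap h₃, congrArg swap h₄⟩
  | .inl _, .inl _, _, _, h => simp [IsC4In] at h
  | .inr _, .inr _, _, _, h => simp [IsC4In] at h
  | _, .inl _, .inl _, _, h => simp [IsC4In] at h
  | _, .inr _, .inr _, _, h => simp [IsC4In] at h
  | _, _, .inl _, .inl _, h => simp [IsC4In] at h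
  | _, _, .inr _, .inr _, h => simp [IsC4In] at h

/-! ### From a bisubdivision of `K33` to a cross -/

namespace Bisubdivision

lemma bipLink_meet {α β : Type*} {G : SimpleGraph V}
    {L : Bisubdivision (completeBipartiteGraph α β) G} {i i' : α} {j j' : β} {v : V}
    (hne : (i, j) ≠ (i', j')) (hv : v ∈ (L.bipLink i j).support)
    (hv' : v ∈ (L.bipLink i' j').support) :
    (i = i' ∧ v = L.bv (.inl i)) ∨ (j = j' ∧ v = L.bv (.inr j)) := by
  obtain ⟨rfl | rfl, h⟩ := L.link_meet _ _ (by simpa using hne) v hv hv'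
  · have := L.bv_inj.eq_iff.1 (h.resolve_right (by simp [L.bv_inj.eq_iff]))
    exact .inl ⟨Sum.inl_injective this, rfl⟩
  · have := L.bv_inj.eq_iff.1 (h.resolve_left (by simp [L.bv_inj.eq_iff]))
    exact .inr ⟨Sum.inr_injective this, rfl⟩

section Cross

variable {G : SimpleGraph V}

/-- The cross over the 4-cycle through the first two branch vertices of each class: its paths run
through the third branch vertices, and the link between those two is left over. -/
def cross (L : Bisubdivision K33 G)
    (hC : IsC4In G (L.bv (.inl 0)) (L.bv (.inr 0)) (L.bv (.inl 1)) (L.bv (.inr 1))) :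
    SquareCross G (L.bv (.inl 0)) (L.bv (.inr 0)) (L.bv (.inl 1)) (L.bv (.inr 1)) where
  isC4 := hC
  left := (L.bipLink 0 2).append (L.bipLink 1 2).reverse
  right := (L.bipLink 2 0).reverse.append (L.bipLink 2 1)
  left_isPath := isPath_append (L.link_isPath _) (L.link_isPath _).reverse fun v hv hv' ↦ by
    simpa using bipLink_meet (by simp) hv ((mem_support_reverse_iff _).1 hv')
  right_isPath := isPath_append (L.link_isPath _).reverse (L.link_isPath _) fun v hv hv' ↦ by
    simpa using bipLink_meet (by simp) ((mem_support_reverse_iff _).1 hv) hv'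
  disjoint v hv hv' := by
    simp only [Walk.mem_support_append_iff, Walk.support_reverse, List.mem_reverse] at hv hv'
    rcases hv with hv | hv <;> rcases hv' with hv' | hv' <;>
      simpa using bipLink_meet (by simp) hv hv'

variable {L : Bisubdivision K33 G}
  {hC : IsC4In G (L.bv (.inl 0)) (L.bv (.inr 0)) (L.bv (.inl 1)) (L.bv (.inr 1))} {v : V}

lemma verts_cross_subset : (L.cross hC).verts ⊆ L.verts := by
  rintro v (hv | hv) <;>
    simp only [cross, Set.mem_ofPred_eq, Walk.mem_support_append_iff, Walk.support_reverse,
      List.mem_reverse] at hv <;>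
    exact mem_verts_iff_bipLink.2 (hv.elim (⟨_, _, ·⟩) (⟨_, _, ·⟩))

lemma mem_verts_cross_or_mem_bipLink
    (hsub : C4edges (L.bv (.inl 0)) (L.bv (.inr 0)) (L.bv (.inl 1)) (L.bv (.inr 1)) ⊆ L.edgeSet)
    (hv : v ∈ L.verts) : v ∈ (L.cross hC).verts ∨ v ∈ (L.bipLink 2 2).support := by
  have hends {i j : Fin 3} (he : s(L.bv (.inl i), L.bv (.inr j)) ∈ L.edgeSet)
      (hv : v ∈ (L.bipLink i j).support) : v = L.bv (.inl i) ∨ v = L.bv (.inr j) := by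
    obtain ⟨h, he⟩ := exists_mem_link_edges_of_mk_bv_mem he
    rw [bipLink, (L.link_isPath h).eq_adj_toWalk_of_mem_edges he] at hv
    exact (mem_support_toWalk_iff _).1 hv
  have hleft : v ∈ (L.bipLink 0 2).support ∨ v ∈ (L.bipLink 1 2).support →
      v ∈ (L.cross hC).verts := fun h ↦ .inl (by simpa [cross] using h)
  have hright : v ∈ (L.bipLink 2 0).support ∨ v ∈ (L.bipLink 2 1).support →
      v ∈ (L.cross hC).verts := fun h ↦ .inr (by simpa [cross] using h)
  simp only [C4edges, Set.insert_subset_iff, Set.singleton_subset_iff] at hsub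
  obtain ⟨h₀₀, h₁₀, h₁₁, h₀₁⟩ := hsub
  obtain ⟨i, j, hv⟩ := mem_verts_iff_bipLink.1 hv
  match i, j with
  | 0, 0 => obtain rfl | rfl := hends h₀₀ hv <;> simp [hleft, hright]
  | 0, 1 => obtain rfl | rfl := hends (Sym2.eq_swap ▸ h₀₁) hv <;> simp [hleft, hright]
  | 0, 2 => exact .inl (hleft (.inl hv))
  | 1, 0 => obtain rfl | rfl := hends (Sym2.eq_swap ▸ h₁₀) hv <;> simp [hleft, hright]
  | 1, 1 => obtain rfl | rfl := hends h₁₁ hv <;> simp [hleft, hright]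
  | 1, 2 => exact .inl (hleft (.inr hv))
  | 2, 0 => exact .inl (hright (.inl hv))
  | 2, 1 => exact .inl (hright (.inr hv))
  | 2, 2 => exact .inr hv

lemma eq_or_eq_of_mem_verts_cross (hv : v ∈ (L.cross hC).verts)
    (hv' : v ∈ (L.bipLink 2 2).support) : v = L.bv (.inl 2) ∨ v = L.bv (.inr 2) := by
  rcases hv with hv | hv <;>
    simp only [cross, Set.mem_ofPred_eq, Walk.mem_support_append_iff, Walk.support_reverse,
      List.mem_reverse] at hv <;>
    rcases hv with hv | hv
  all_goals exact (bipLink_meet (by simp) hv' hv).imp And.right And.right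

end Cross

end Bisubdivision

namespace SquareCross

variable {G : SimpleGraph V} {a₁ b₁ a₂ b₂ : V} {N : Set (Sym2 V)} {D : SquareCross G a₁ b₁ a₂ b₂}

lemma exists_isPMOn_isRooted (D : SquareCross G a₁ b₁ a₂ b₂) (col : G.Coloring Bool) :
    ∃ N, IsPMOn G D.verts N ∧ D.IsRooted N := by
  obtain ⟨N₁, h₁, hN₁⟩ := (exists_isPMOn_of_length D.left_isPath).2 (D.even_length_left col)
  obtain ⟨N₂, h₂, hN₂⟩ := (exists_isPMOn_of_length D.right_isPath).2 (D.swap.even_length_left col)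
  have hunion : D.verts = {a₁, b₁} ∪ ({x | x ∈ D.left.support ∧ x ≠ a₁} ∪
      {x | x ∈ D.right.support ∧ x ≠ b₁}) := by
    have := D.left.start_mem_support
    have := D.right.start_mem_support
    ext x
    simp only [verts, Set.mem_union, Set.mem_ofPred_eq, Set.mem_insert_iff, Set.mem_singleton_iff]
    grind
  have hdisj₁ : Disjoint {x | x ∈ D.left.support ∧ x ≠ a₁} {x | x ∈ D.right.support ∧ x ≠ b₁} :=
    Set.disjoint_left.2 fun x hx hx' ↦ D.disjoint hx.1 hx'.1
  have hdisj₂ : Disjoint {a₁, b₁} ({x | x ∈ D.left.support ∧ x ≠ a₁} ∪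
      {x | x ∈ D.right.support ∧ x ≠ b₁}) := by
    have ha₁ : a₁ ∉ D.right.support := D.disjoint D.left.start_mem_support
    have hb₁ : b₁ ∉ D.left.support := fun h ↦ D.disjoint h D.right.start_mem_support
    simp [Set.disjoint_left, ha₁, hb₁]
  refine ⟨{s(a₁, b₁)} ∪ (N₁ ∪ N₂), hunion ▸
    (isPMOn_pair D.isC4.2.1).union (h₁.union h₂ hdisj₁) hdisj₂, .inl rfl, fun v hv hne ↦ ?_,
    fun v hv hne ↦ ?_⟩
  · obtain ⟨e, ⟨he, hve⟩, -⟩ := h₁.2.2 v ⟨hv, hne⟩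
    exact ⟨e, .inr (.inl he), hN₁ he, hve⟩
  · obtain ⟨e, ⟨he, hve⟩, -⟩ := h₂.2.2 v ⟨hv, hne⟩
    exact ⟨e, .inr (.inr he), hN₂ he, hve⟩

lemma IsRooted.mAlternating_left (h : D.IsRooted N) (hN : IsPM G N) : MAlternating G N D.left := by
  refine ⟨{a₁}, by simp, fun x ⟨hx, hx₁⟩ ↦ ?_⟩
  obtain ⟨e, he, heD, hxe⟩ := h.left x hx hx₁
  refine ⟨e, ⟨he, heD, ?_, hxe⟩, fun f hf ↦
    (hN.2.2 x (Set.mem_univ x)).unique ⟨hf.1, hf.2.2.2⟩ ⟨he, hxe⟩⟩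
  obtain ⟨y, rfl⟩ := Sym2.mem_iff_exists.1 hxe
  have hy := h.partner_mem_left_ne hN hx hx₁
  rw [← hN.eq_partner he] at hy
  exact Sym2.ball.2 ⟨⟨hx, hx₁⟩, hy⟩

lemma IsRooted.hasConformalCross (h : D.IsRooted N) (hN : IsPM G N) {C : G.Walk a₁ a₁}
    (hsupp : C.support = [a₁, b₁, a₂, b₂, a₁]) (hedges : {e | e ∈ C.edges} = C4edges a₁ b₁ a₂ b₂) :
    HasConformalCross G C := by
  have hcyc : InCyclicOrder G C a₁ b₁ a₂ b₂ := ⟨3, .inl (by simp [hsupp, List.rotate])⟩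
  have hleft : ∀ x ∈ D.left.support, x ≠ a₁ → x ≠ a₂ → x ∉ C.support := by
    have := D.right.start_mem_support
    have := D.right.end_mem_support
    have := D.disjoint
    grind [List.Disjoint]
  have hright : ∀ x ∈ D.right.support, x ≠ b₁ → x ≠ b₂ → x ∉ C.support := by
    have := D.left.start_mem_support
    have := D.left.end_mem_support
    have := D.disjoint
    grind [List.Disjoint]
  have hverts : {x | x ∈ C.support} ∪ {x | x ∈ D.left.support} ∪ {x | x ∈ D.right.support} ⊆
      D.verts := by
    rintro x ((hx | hx) | hx)
    · by_contra hxD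
      have := D.left.start_mem_support
      have := D.left.end_mem_support
      have := D.right.start_mem_support
      have := D.right.end_mem_support
      grind [verts]
    · exact .inl hx
    · exact .inr hx
  exact ⟨N, a₁, a₂, b₁, b₂, D.left, D.right, ⟨hN, D.isC4.1, hcyc, D.left_isPath, D.right_isPath,
    h.mAlternating_left hN, h.swap.mAlternating_left hN, fun x ↦ @D.disjoint x, hleft, hright⟩, N,
    hN, hedges ▸ hN.matchesExactly (Set.subset_univ _) fun v hv ↦ h.exists_mem_edgeSet (hverts hv)⟩

end SquareCross

namespace Bisubdivision

variable {G : SimpleGraph V}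

lemma exists_isPM_isRooted_cross (col : G.Coloring Bool) {L : Bisubdivision K33 G}
    (hL : L.ConformalOn Set.univ)
    (hC : IsC4In G (L.bv (.inl 0)) (L.bv (.inr 0)) (L.bv (.inl 1)) (L.bv (.inr 1)))
    (hsub : C4edges (L.bv (.inl 0)) (L.bv (.inr 0)) (L.bv (.inl 1)) (L.bv (.inr 1)) ⊆ L.edgeSet) :
    ∃ N, IsPM G N ∧ (L.cross hC).IsRooted N := by
  obtain ⟨M, hM, hLM⟩ := hL
  obtain ⟨N₁, hN₁, hroot⟩ := (L.cross hC).exists_isPMOn_isRooted col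
  obtain ⟨N₂, hN₂, -⟩ := exists_isPMOn_interior (p := L.bipLink 2 2) (L.link_isPath _)
    (L.link_odd _)
  have hN₃ := hLM.isPMOn_compl hM fun e ⟨x, y, h, he⟩ v hv ↦
    ⟨x, y, h, mem_support_of_mem_edges he hv⟩
  set I := {x | x ∈ (L.bipLink 2 2).support ∧ x ≠ L.bv (.inl 2) ∧ x ≠ L.bv (.inr 2)}
  have hI : I ⊆ L.verts := fun x hx ↦ mem_verts_iff_bipLink.2 ⟨2, 2, hx.1⟩
  have hdisj : Disjoint (L.cross hC).verts I := Set.disjoint_left.2 fun x hx hxI ↦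
    (eq_or_eq_of_mem_verts_cross hx hxI.1).elim hxI.2.1 hxI.2.2
  have hunion : (L.cross hC).verts ∪ I = L.verts := by
    refine (Set.union_subset verts_cross_subset hI).antisymm fun x hx ↦ ?_
    have h₁ : L.bv (.inl 2) ∈ (L.cross hC).verts := .inr (by simp [cross])
    have h₂ : L.bv (.inr 2) ∈ (L.cross hC).verts := .inl (by simp [cross])
    by_cases hxC : x ∈ (L.cross hC).verts
    · exact .inl hxC
    · exact .inr ⟨(mem_verts_cross_or_mem_bipLink hsub hx).resolve_left hxC,
        fun h ↦ hxC (h ▸ h₁), fun h ↦ hxC (h ▸ h₂)⟩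
  have hN₁₂ := hN₁.union hN₂ hdisj
  rw [hunion] at hN₁₂
  have hN := hN₁₂.union hN₃ disjoint_compl_right
  rw [Set.union_compl_self] at hN
  exact ⟨_, hN, hroot.mono fun e he ↦ .inl (.inl he)⟩

lemma exists_relabel_of_C4edges_subset (col : G.Coloring Bool) (L : Bisubdivision K33 G)
    {a b c d : V} (hnd : [a, b, c, d].Nodup) (hsub : C4edges a b c d ⊆ L.edgeSet) :
    ∃ σ : K33 ≃g K33, (L.relabel σ).bv (.inl 0) = a ∧ (L.relabel σ).bv (.inr 0) = b ∧
      (L.relabel σ).bv (.inl 1) = c ∧ (L.relabel σ).bv (.inr 1) = d := by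
  obtain ⟨x, y, z, w, h, rfl, rfl, rfl, rfl⟩ := exists_isC4In_of_C4edges_subset col hnd hsub
  obtain ⟨σ, rfl, rfl, rfl, rfl⟩ := exists_iso_K33_of_isC4In h
  exact ⟨σ, rfl, rfl, rfl, rfl⟩

lemma ConformalOn.hasConformalCross (col : G.Coloring Bool) {L : Bisubdivision K33 G}
    (hL : L.ConformalOn Set.univ) {c : V} {C : G.Walk c c} (hC : C.IsCycle) (hlen : C.length = 4)
    (hsub : {e | e ∈ C.edges} ⊆ L.edgeSet) : HasConformalCross G C := by
  obtain ⟨c₁, c₂, c₃, hC4, hsupp, hedges⟩ := exists_eq_of_isCycle_of_length_eq_four hC hlen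
  rw [hedges] at hsub
  obtain ⟨σ, rfl, rfl, rfl, rfl⟩ := L.exists_relabel_of_C4edges_subset col hC4.1 hsub
  have hσ : (L.relabel σ).ConformalOn Set.univ := by
    simpa only [ConformalOn, MConformal, verts_relabel, edgeSet_relabel] using hL
  obtain ⟨N, hN, hroot⟩ := exists_isPM_isRooted_cross col hσ hC4 (edgeSet_relabel L σ ▸ hsub)
  exact hroot.hasConformalCross hN hsupp hedges

end Bisubdivision

/-- a 4-cycle in a brace has a conformal cross iff it is contained in a
conformal bisubdivision of `K₃,₃`. -/
theorem statement_1 {V : Type*} [Fintype V] [DecidableEq V] (B : SimpleGraph V)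
    (hbip : IsBipartite B) (hbrace : IsBrace B)
    {c : V} (C : B.Walk c c) (hC : C.IsCycle) (hlen : C.length = 4) :
    HasConformalCross B C ↔
      ∃ L : Bisubdivision K33 B, L.ConformalOn Set.univ ∧ ∀ f ∈ C.edges, f ∈ L.edgeSet := by
  obtain ⟨col⟩ := exists_coloring_of_isBipartite hbip
  constructor
  · intro hcross
    obtain ⟨_, _, _, _, D, N, hN, hD, hCD⟩ := hcross.exists_squareCross hC hlen
    obtain ⟨_, _, _, _, D', hedges, hroot⟩ := SquareCross.exists_isRooted col hN hD
    obtain ⟨L, hL, hDL⟩ := hroot.exists_bisubdivision col hbrace hN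
    exact ⟨L, ⟨N, hN, hL⟩, fun f hf ↦ hDL (hedges ▸ hCD hf)⟩
  · rintro ⟨L, hL, hsub⟩
    exact hL.hasConformalCross col hC hlen hsub

end Paper
end
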